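/- For every complex number z with 0 < |z| < 1 that lies in the interior of one of the regions R(1), R(2), R(3), one has (1/n)·ln|F_n(z)| → 0 as n → ∞. -/

import Mathlib

open Complex Filter

/-- `partsCount k n` is the number of partitions of `n` with exactly `k` parts. -/
noncomputable def partsCount (k n : ℕ) : ℕ := Nat.card {p : Nat.Partition n // p.parts.card = k}

/-- The partition polynomial `F_n(x) = ∑_{k=1}^n p_k(n) x^k`. -/
noncomputable def F (n : ℕ) (x : ℂ) : ℂ := ∑ k ∈ Finset.Icc 1 n, (partsCount k n : ℂ) * x ^ k

/-- The dilogarithm `Li₂(z) = ∑_{n=1}^∞ zⁿ/n²`. -/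
noncomputable def dilog (z : ℂ) : ℂ := ∑' n : ℕ, z ^ (n + 1) / ((n : ℂ) + 1) ^ 2

/-- `fk k x = (1/k)·Re √(Li₂(x^k))` with the principal branch square root. -/
noncomputable def fk (k : ℕ) (x : ℂ) : ℝ := (1 / (k : ℝ)) * ((dilog (x ^ k)) ^ (1 / 2 : ℂ)).re

/-- The region `R(1)`. -/
def R1 : Set ℂ := {x | ‖x‖ < 1 ∧ fk 2 x ≤ fk 1 x ∧ fk 3 x ≤ fk 1 x}

/-- The region `R(2)`. -/
def R2 : Set ℂ := {x | ‖x‖ < 1 ∧ fk 1 x ≤ fk 2 x ∧ fk 3 x ≤ fk 2 x}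

/-- The region `R(3)`. -/
def R3 : Set ℂ := {x | ‖x‖ < 1 ∧ fk 1 x ≤ fk 3 x ∧ fk 2 x ≤ fk 3 x}

/-! Cauchy's formula for `∏ (1 - z uⁱ)⁻¹`, with `u = exp (-w)` and `w` running over a vertical
segment of length `2π`, expresses `F n z` as an integral. When `w` approaches `α * I` with
`exp (-α * I)` a primitive `k`-th root of unity, the logarithm of the product behaves like
`dilog (z ^ k) / (k ^ 2 * (w - α * I))`, so against `exp (n * w)` that point contributes a saddle of
modulus about `exp (2 * √n * fk k z)`. In the interior of the regions a single `k ∈ {1, 2, 3}` is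
strictly dominant, which makes every other arc negligible, and for `k ≤ 2` the one saddle left is
nonzero. For `k = 3` there are two saddles, at conjugate roots of unity; dominance of `3` forces
`z ∉ ℝ`, hence their moduli differ and they cannot cancel. In all cases `|F n z|` is within
`exp (O(√n))` of `1` from both sides. -/

open Finset (range)
open scoped Topology

/-! ### The dilogarithm on the unit disk -/

theorem norm_one_sub_mul_tsum_le {a : ℕ → ℝ} (ha : Antitone a) (hs : Summable a) {x : ℂ}
    (hx : ‖x‖ ≤ 1) : ‖(1 - x) * ∑' n, (a n : ℂ) * x ^ n‖ ≤ 2 * a 0 := by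
  have hpow (n : ℕ) : ‖x ^ n‖ ≤ 1 := by
    rw [norm_pow]; exact pow_le_one₀ (norm_nonneg x) hx
  have ha₀ (n : ℕ) : 0 ≤ a n := ha.le_of_tendsto hs.tendsto_atTop_zero n
  have hsx : Summable fun n ↦ (a n : ℂ) * x ^ n :=
    .of_norm_bounded hs fun n ↦ by
      rw [norm_mul, norm_real, Real.norm_of_nonneg (ha₀ n)]
      exact mul_le_of_le_one_right (ha₀ n) (hpow n)
  have hdiff : HasSum (fun n ↦ a n - a (n + 1)) (a 0) := by
    simpa using hs.hasSum.sub ((hasSum_nat_add_iff' 1).2 hs.hasSum)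
  have hshift : (1 - x) * ∑' n, (a n : ℂ) * x ^ n =
      a 0 - ∑' n, ((a n - a (n + 1) : ℝ) : ℂ) * x ^ (n + 1) := by
    have h₁ := hsx.tsum_eq_zero_add
    have h₂ := (hsx.mul_left x).tsum_sub ((summable_nat_add_iff 1).2 hsx)
    rw [tsum_mul_left] at h₂
    have h₃ : ∑' n, ((a n - a (n + 1) : ℝ) : ℂ) * x ^ (n + 1) =
        ∑' n, (x * ((a n : ℂ) * x ^ n) - (a (n + 1) : ℂ) * x ^ (n + 1)) := by
      congr! 2 with n
      push_cast; ring
    rw [h₃, h₂, sub_mul, one_mul]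
    nth_rw 1 [h₁]
    simp only [pow_zero, mul_one]
    ring
  have htail : ‖∑' n, ((a n - a (n + 1) : ℝ) : ℂ) * x ^ (n + 1)‖ ≤ a 0 :=
    tsum_of_norm_bounded hdiff fun n ↦ by
      have h := sub_nonneg.2 (ha n.le_succ)
      rw [norm_mul, norm_real, Real.norm_of_nonneg h]
      exact mul_le_of_le_one_right h (hpow _)
  calc ‖(1 - x) * ∑' n, (a n : ℂ) * x ^ n‖ ≤ ‖(a 0 : ℂ)‖ + a 0 := by
        rw [hshift]; exact (norm_sub_le _ _).trans (by gcongr)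
    _ = 2 * a 0 := by rw [norm_real, Real.norm_of_nonneg (ha₀ 0)]; ring

/-- The tail of the dilogarithm series after `m` terms, divided by `x ^ (m + 1)`. -/
noncomputable def dilogTail (m : ℕ) (x : ℂ) : ℂ :=
  ∑' n : ℕ, ((1 / ((n : ℝ) + m + 1) ^ 2 : ℝ) : ℂ) * x ^ n

theorem hasSum_one_div_nat_add_sq (m : ℕ) : HasSum (fun n : ℕ ↦ 1 / ((n : ℝ) + m + 1) ^ 2)
    (Real.pi ^ 2 / 6 - ∑ i ∈ range m, 1 / ((i : ℝ) + 1) ^ 2) := by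
  have h : HasSum (fun n : ℕ ↦ 1 / ((n : ℝ) + 1) ^ 2) (Real.pi ^ 2 / 6) := by
    simpa using (hasSum_nat_add_iff' 1).2 hasSum_zeta_two
  simpa using (hasSum_nat_add_iff' m).2 h

theorem pi_sq_div_six_lt : Real.pi ^ 2 / 6 < 1.645 := by
  nlinarith [Real.pi_lt_d4, Real.pi_pos]

theorem norm_dilogTail_term_le {x : ℂ} (hx : ‖x‖ ≤ 1) (m n : ℕ) :
    ‖((1 / ((n : ℝ) + m + 1) ^ 2 : ℝ) : ℂ) * x ^ n‖ ≤ 1 / ((n : ℝ) + m + 1) ^ 2 := by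
  rw [norm_mul, norm_real, Real.norm_of_nonneg (by positivity), norm_pow]
  exact mul_le_of_le_one_right (by positivity) (pow_le_one₀ (norm_nonneg x) hx)

theorem norm_dilogTail_le (m : ℕ) {x : ℂ} (hx : ‖x‖ ≤ 1) :
    ‖dilogTail m x‖ ≤ Real.pi ^ 2 / 6 - ∑ i ∈ range m, 1 / ((i : ℝ) + 1) ^ 2 :=
  tsum_of_norm_bounded (hasSum_one_div_nat_add_sq m) (norm_dilogTail_term_le hx m)

theorem norm_one_sub_mul_dilogTail_le (m : ℕ) {x : ℂ} (hx : ‖x‖ ≤ 1) :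
    ‖(1 - x) * dilogTail m x‖ ≤ 2 / ((m : ℝ) + 1) ^ 2 := by
  have ha : Antitone fun n : ℕ ↦ 1 / ((n : ℝ) + m + 1) ^ 2 := fun i j hij ↦ by
    dsimp only; gcongr
  simpa [dilogTail, div_eq_mul_inv] using
    norm_one_sub_mul_tsum_le ha (hasSum_one_div_nat_add_sq m).summable hx

theorem hasSum_dilog {x : ℂ} (hx : ‖x‖ ≤ 1) :
    HasSum (fun n : ℕ ↦ x ^ (n + 1) / ((n : ℂ) + 1) ^ 2) (dilog x) := by
  have hs := Summable.of_norm_bounded (hasSum_one_div_nat_add_sq 0).summable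
    (norm_dilogTail_term_le hx 0)
  exact ((hs.mul_left x).congr fun n ↦ by push_cast; ring).hasSum

theorem dilog_eq_sum_add_dilogTail (m : ℕ) {x : ℂ} (hx : ‖x‖ ≤ 1) :
    dilog x = ∑ n ∈ range m, x ^ (n + 1) / ((n : ℂ) + 1) ^ 2 + x ^ (m + 1) * dilogTail m x := by
  have h := (hasSum_dilog hx).summable.sum_add_tsum_nat_add m
  rw [(hasSum_dilog hx).tsum_eq] at h
  rw [← h, dilogTail, ← tsum_mul_left]
  congr! 3 with n
  push_cast; ring

theorem norm_dilog_le {x : ℂ} (hx : ‖x‖ ≤ 1) : ‖dilog x‖ ≤ 1.645 * ‖x‖ := by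
  have h := norm_dilogTail_le 0 hx
  rw [Finset.sum_range_zero, sub_zero] at h
  rw [dilog_eq_sum_add_dilogTail 0 hx, Finset.sum_range_zero, zero_add, zero_add, pow_one,
    norm_mul, mul_comm]
  gcongr
  exact h.trans pi_sq_div_six_lt.le

theorem norm_dilog_sub_le {x : ℂ} (hx : ‖x‖ ≤ 1) : ‖dilog x - x‖ ≤ 0.645 * ‖x‖ := by
  have h := norm_dilogTail_le 1 hx
  rw [Finset.sum_range_one] at h
  have hT : ‖dilogTail 1 x‖ ≤ 0.645 := by
    norm_num at h ⊢; linarith [pi_sq_div_six_lt]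
  have hx2 : ‖x ^ 2‖ ≤ ‖x‖ := by
    rw [norm_pow]; exact pow_le_of_le_one (norm_nonneg x) hx two_ne_zero
  calc ‖dilog x - x‖ = ‖x ^ 2‖ * ‖dilogTail 1 x‖ := by
        rw [dilog_eq_sum_add_dilogTail 1 hx, ← norm_mul]; simp
    _ ≤ ‖x‖ * 0.645 := by gcongr
    _ = 0.645 * ‖x‖ := mul_comm _ _

theorem le_norm_dilog {x : ℂ} (hx : ‖x‖ ≤ 1) : 0.355 * ‖x‖ ≤ ‖dilog x‖ := by
  have := norm_sub_norm_le x (x - dilog x)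
  rw [sub_sub_cancel, norm_sub_rev x] at this
  linarith [norm_dilog_sub_le hx]

theorem dilog_zero : dilog 0 = 0 := by simp [dilog]

theorem dilog_ofReal_im (a : ℝ) : (dilog (a : ℂ)).im = 0 := by
  have : dilog (a : ℂ) = ((∑' n : ℕ, a ^ (n + 1) / ((n : ℝ) + 1) ^ 2 : ℝ) : ℂ) := by
    rw [ofReal_tsum]; simp [dilog]
  rw [this, ofReal_im]

theorem norm_one_sub_sq (x : ℂ) : ‖1 - x‖ ^ 2 = 1 - 2 * x.re + ‖x‖ ^ 2 := by
  rw [Complex.sq_norm, Complex.sq_norm, normSq_apply, normSq_apply]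
  simp only [sub_re, sub_im, one_re, one_im]
  ring

theorem dilog_re_nonpos {y : ℂ} (hy : ‖y‖ ≤ 1) (h : y.re ≤ 0) : (dilog y).re ≤ 0 := by
  have hone : 1 ≤ ‖1 - y‖ := by
    rw [← one_le_sq_iff₀ (norm_nonneg _), norm_one_sub_sq]
    nlinarith [sq_nonneg ‖y‖]
  have hT : ‖dilogTail 2 y‖ ≤ 2 / 9 := by
    have := norm_one_sub_mul_dilogTail_le 2 hy
    rw [norm_mul] at this
    calc ‖dilogTail 2 y‖ ≤ ‖1 - y‖ * ‖dilogTail 2 y‖ :=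
          le_mul_of_one_le_left (norm_nonneg _) hone
      _ ≤ 2 / 9 := this.trans (by norm_num)
  have hyT : (y ^ 3 * dilogTail 2 y).re ≤ 2 / 9 * ‖y‖ ^ 2 := by
    refine (re_le_norm _).trans ?_
    rw [norm_mul, norm_pow, mul_comm]
    exact mul_le_mul hT (pow_le_pow_of_le_one (norm_nonneg y) hy (by norm_num)) (by positivity)
      (by norm_num)
  have hsplit : (dilog y).re = y.re + (y.re ^ 2 - y.im ^ 2) / 4 + (y ^ 3 * dilogTail 2 y).re := by
    rw [dilog_eq_sum_add_dilogTail 2 hy]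
    norm_num [Finset.sum_range_succ, pow_two]
  have hsq : ‖y‖ ^ 2 = y.re ^ 2 + y.im ^ 2 := by rw [Complex.sq_norm, normSq_apply]; ring
  have hre : -1 ≤ y.re := (abs_le.1 ((abs_re_le_norm y).trans hy)).1
  rw [hsq] at hyT
  nlinarith [sq_nonneg y.im]

theorem differentiableOn_dilog : DifferentiableOn ℂ dilog (Metric.ball 0 1) := by
  refine differentiableOn_tsum_of_summable_norm (hasSum_one_div_nat_add_sq 0).summable
    (fun n ↦ by fun_prop) Metric.isOpen_ball fun n w hw ↦ ?_
  have hw' : ‖w‖ ≤ 1 := (mem_ball_zero_iff.1 hw).le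
  calc ‖w ^ (n + 1) / ((n : ℂ) + 1) ^ 2‖
      = ‖w‖ * ‖((1 / ((n : ℝ) + (0 : ℕ) + 1) ^ 2 : ℝ) : ℂ) * w ^ n‖ := by
        rw [← norm_mul]; congr 1; push_cast; ring
    _ ≤ 1 * (1 / ((n : ℝ) + (0 : ℕ) + 1) ^ 2) :=
        mul_le_mul hw' (norm_dilogTail_term_le hw' 0 n) (norm_nonneg _) zero_le_one
    _ = _ := one_mul _

theorem analyticOnNhd_dilog_pow {k : ℕ} (hk : k ≠ 0) :
    AnalyticOnNhd ℂ (fun x ↦ dilog (x ^ k)) (Metric.ball 0 1) := by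
  refine (differentiableOn_dilog.comp (by fun_prop) fun x hx ↦ ?_).analyticOnNhd Metric.isOpen_ball
  rw [mem_ball_zero_iff] at *
  rw [norm_pow]
  exact pow_lt_one₀ (norm_nonneg x) hx hk

/-! ### The functions `fk` -/

theorem fk_eq_sqrt (k : ℕ) (x : ℂ) :
    fk k x = √((‖dilog (x ^ k)‖ + (dilog (x ^ k)).re) / 2) / k := by
  rw [fk, one_div (2 : ℂ), cpow_inv_two_re, one_div_mul_eq_div]

theorem fk_nonneg (k : ℕ) (x : ℂ) : 0 ≤ fk k x := by
  rw [fk_eq_sqrt]; positivity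

theorem fk_sq (k : ℕ) (x : ℂ) :
    fk k x ^ 2 = (‖dilog (x ^ k)‖ + (dilog (x ^ k)).re) / (2 * (k : ℝ) ^ 2) := by
  have h : 0 ≤ ‖dilog (x ^ k)‖ + (dilog (x ^ k)).re := by
    linarith [neg_le_of_abs_le (abs_re_le_norm (dilog (x ^ k)))]
  rw [fk_eq_sqrt, div_pow, Real.sq_sqrt (by positivity), div_div]

theorem fk_sq_le {k : ℕ} (hk : k ≠ 0) {x : ℂ} (hx : ‖x‖ ≤ 1) :
    fk k x ^ 2 ≤ 1.645 * ‖x‖ ^ k / (k : ℝ) ^ 2 := by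
  have hxk : ‖x ^ k‖ ≤ 1 := by rw [norm_pow]; exact pow_le_one₀ (norm_nonneg x) hx
  have h := norm_dilog_le hxk
  rw [norm_pow] at h
  rw [fk_sq, ← div_div]
  gcongr
  linarith [re_le_norm (dilog (x ^ k))]

theorem dilog_pow_mem_slitPlane {k : ℕ} {x : ℂ} (h : 0 < fk k x) : dilog (x ^ k) ∈ slitPlane := by
  by_contra hc
  obtain ⟨hre, him⟩ : (dilog (x ^ k)).re ≤ 0 ∧ (dilog (x ^ k)).im = 0 := by
    simpa [mem_slitPlane_iff] using hc
  have hnorm : ‖dilog (x ^ k)‖ = -(dilog (x ^ k)).re := by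
    rw [← abs_of_nonpos hre, abs_re_eq_norm.2 him]
  rw [fk_eq_sqrt, hnorm] at h
  simp at h

/-! ### Lower bounds for `fk 1`, with `W = 2 + 2 cos (arg x)` -/

theorem re_sum_range_four_mul_one_add_conj {u : ℂ} (hu : ‖u‖ = 1) (r : ℝ) {W : ℝ}
    (hW : W = 2 + 2 * u.re) :
    ((∑ n ∈ range 4, (r * u) ^ (n + 1) / ((n : ℂ) + 1) ^ 2) * (1 + (starRingEnd ℂ) u)).re =
      r * (W / 2) * (1 + r * (W - 3) / 4 + r ^ 2 * (W ^ 2 - 5 * W + 5) / 9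
        + r ^ 3 * (W ^ 3 - 7 * W ^ 2 + 14 * W - 7) / 16) := by
  have huu : u.re ^ 2 + u.im ^ 2 = 1 := by
    rw [← one_pow 2, ← hu, Complex.sq_norm, normSq_apply]; ring
  have hmul (n : ℕ) : u ^ (n + 1) * (1 + (starRingEnd ℂ) u) = u ^ (n + 1) + u ^ n := by
    have hconj : u * (starRingEnd ℂ) u = 1 := by rw [mul_conj, normSq_eq_norm_sq, hu]; simp
    linear_combination u ^ n * hconj
  have hsum : (∑ n ∈ range 4, (r * u) ^ (n + 1) / ((n : ℂ) + 1) ^ 2) * (1 + (starRingEnd ℂ) u) =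
      r * (u + 1) + (r ^ 2 / 4 : ℝ) * (u ^ 2 + u) + (r ^ 3 / 9 : ℝ) * (u ^ 3 + u ^ 2)
        + (r ^ 4 / 16 : ℝ) * (u ^ 4 + u ^ 3) := by
    have h (n : ℕ) (c : ℂ) : (r * u) ^ (n + 1) / c * (1 + (starRingEnd ℂ) u) =
        r ^ (n + 1) / c * (u ^ (n + 1) + u ^ n) := by
      rw [← hmul]; ring
    simp only [Finset.sum_range_succ, Finset.sum_range_zero, add_mul, h]
    norm_num
  have h₂ : (u ^ 2).re = 2 * u.re ^ 2 - 1 := by simp only [pow_two, mul_re]; linarith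
  have h₃ : (u ^ 3).re = 4 * u.re ^ 3 - 3 * u.re := by
    simp only [pow_succ, pow_zero, one_mul, mul_re, mul_im]
    linear_combination (-3 * u.re) * huu
  have h₄ : (u ^ 4).re = 8 * u.re ^ 4 - 8 * u.re ^ 2 + 1 := by
    simp only [pow_succ, pow_zero, one_mul, mul_re, mul_im]
    linear_combination (-7 * u.re ^ 2 + u.im ^ 2 + 1) * huu
  rw [hsum, hW]
  simp only [add_re, re_ofReal_mul, one_re, h₂, h₃, h₄]
  ring

theorem le_fk_one_sq {u : ℂ} (hu : ‖u‖ = 1) {r W : ℝ} (hr₀ : 0 ≤ r) (hr₁ : r ≤ 1)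
    (hW : W = 2 + 2 * u.re) :
    r * (W / 4) * (1 + r * (W - 3) / 4 + r ^ 2 * (W ^ 2 - 5 * W + 5) / 9
      + r ^ 3 * (W ^ 3 - 7 * W ^ 2 + 14 * W - 7) / 16)
      - √W / 2 * (r ^ 5 * ‖dilogTail 4 (r * u)‖) ≤ fk 1 (r * u) ^ 2 := by
  have hnorm : ‖(r * u : ℂ)‖ = r := by
    rw [norm_mul, norm_real, hu, mul_one, Real.norm_of_nonneg hr₀]
  have huu : u.re ^ 2 + u.im ^ 2 = 1 := by
    rw [← one_pow 2, ← hu, Complex.sq_norm, normSq_apply]; ring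
  set y : ℂ := 1 + (starRingEnd ℂ) u with hy
  have hy_norm : ‖y‖ = √W := by
    rw [← Real.sqrt_sq (norm_nonneg y), Complex.sq_norm, normSq_apply]
    congr 1
    simp only [hy, add_re, one_re, conj_re, add_im, one_im, conj_im]
    linarith
  have hrot : (dilog (r * u) * y).re ≤ ‖dilog (r * u)‖ + (dilog (r * u)).re := by
    have h := re_le_norm (dilog (r * u) * (starRingEnd ℂ) u)
    rw [norm_mul, RCLike.norm_conj, hu, mul_one] at h
    rw [hy, mul_add, mul_one, add_re]
    linarith
  have htail : -(√W * (r ^ 5 * ‖dilogTail 4 (r * u)‖)) ≤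
      ((r * u) ^ 5 * dilogTail 4 (r * u) * y).re := by
    have h := neg_le_of_abs_le (abs_re_le_norm ((r * u) ^ 5 * dilogTail 4 (r * u) * y))
    rw [norm_mul, norm_mul, norm_pow, hnorm, hy_norm] at h
    linarith
  have hsplit : (dilog (r * u) * y).re = _ :=
    congrArg (fun w : ℂ ↦ (w * y).re) (dilog_eq_sum_add_dilogTail 4 (hnorm.trans_le hr₁))
  simp only [add_mul, add_re] at hsplit
  have hhead := re_sum_range_four_mul_one_add_conj hu r hW
  rw [fk_sq]
  simp only [pow_one, Nat.cast_one, one_pow, mul_one]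
  linarith

theorem sqrt_le_of_pos {W l : ℝ} (hl : 0 < l) (hW : 0 ≤ W) : √W ≤ (W / l + l) / 2 := by
  rw [div_add' _ _ _ hl.ne', div_div, le_div_iff₀ (by positivity)]
  nlinarith [Real.sq_sqrt hW, sq_nonneg (√W - l)]

theorem cubic_pos_of_bernstein_pos {a₀ a₁ a₂ a₃ r : ℝ} (hr₀ : 0 ≤ r) (hr₁ : r ≤ 1) (h₀ : 0 < a₀)
    (h₁ : 0 < 3 * a₀ + a₁) (h₂ : 0 < 3 * a₀ + 2 * a₁ + a₂) (h₃ : 0 < a₀ + a₁ + a₂ + a₃) :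
    0 < a₀ + a₁ * r + a₂ * r ^ 2 + a₃ * r ^ 3 := by
  have hs : 0 ≤ 1 - r := sub_nonneg.2 hr₁
  calc 0 < a₀ * (1 - r) ^ 3 + (3 * a₀ + a₁) * (r * (1 - r) ^ 2)
        + (3 * a₀ + 2 * a₁ + a₂) * (r ^ 2 * (1 - r)) + (a₀ + a₁ + a₂ + a₃) * r ^ 3 := by
        rcases hr₀.eq_or_lt with rfl | hr
        · simpa using h₀
        · positivity
    _ = a₀ + a₁ * r + a₂ * r ^ 2 + a₃ * r ^ 3 := by ring

section LowerBound

variable {u : ℂ} (hu : ‖u‖ = 1) {r : ℝ} (hr₀ : 0 < r) (hr₁ : r ≤ 1)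
include hu hr₀ hr₁

theorem mul_norm_dilogTail_four_le {g : ℝ} (hg : 0 < g) (hgu : g ^ 2 ≤ 2 - 2 * u.re) :
    r * ‖dilogTail 4 (r * u)‖ ≤ 2 / 25 / g := by
  have hnorm : ‖(r * u : ℂ)‖ = r := by
    rw [norm_mul, norm_real, hu, mul_one, Real.norm_of_nonneg hr₀.le]
  have hrg : r * g ≤ ‖1 - r * u‖ := by
    refine (pow_le_pow_iff_left₀ (by positivity) (norm_nonneg _) two_ne_zero).1 ?_
    rw [norm_one_sub_sq, hnorm, re_ofReal_mul]
    nlinarith [mul_le_mul_of_nonneg_left hgu (sq_nonneg r),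
      mul_nonneg (sub_nonneg.2 hr₁) hr₀.le, sq_nonneg g, sq_nonneg (1 - r)]
  have htail := norm_one_sub_mul_dilogTail_le 4 (hnorm.trans_le hr₁)
  rw [norm_mul] at htail
  rw [le_div_iff₀ hg]
  calc r * ‖dilogTail 4 (r * u)‖ * g = r * g * ‖dilogTail 4 (r * u)‖ := by ring
    _ ≤ ‖1 - r * u‖ * ‖dilogTail 4 (r * u)‖ := by gcongr
    _ ≤ 2 / 25 := htail.trans (by norm_num)

theorem lt_fk_one_sq_of_bernstein_pos {W : ℝ} (hW : W = 2 + 2 * u.re) (hW₀ : 0 < W)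
    {l t B₁ B₃ : ℝ} (hl : 0 < l)
    (ht : r * ‖dilogTail 4 (r * u)‖ ≤ t)
    (h₁ : 0 < 3 * (W / 4) + (W / 4 * ((W - 3) / 4) - B₁))
    (h₂ : 0 < 3 * (W / 4) + 2 * (W / 4 * ((W - 3) / 4) - B₁)
      + W / 4 * ((W ^ 2 - 5 * W + 5) / 9))
    (h₃ : 0 < W / 4 + (W / 4 * ((W - 3) / 4) - B₁) + W / 4 * ((W ^ 2 - 5 * W + 5) / 9)
      + (W / 4 * ((W ^ 3 - 7 * W ^ 2 + 14 * W - 7) / 16) - (W / l + l) / 4 * t - B₃)) :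
    B₁ * r ^ 2 + B₃ * r ^ 4 < fk 1 (r * u) ^ 2 := by
  have hsqrt : √W / 2 ≤ (W / l + l) / 4 := by linarith [sqrt_le_of_pos hl hW₀.le]
  have htail : √W / 2 * (r ^ 5 * ‖dilogTail 4 (r * u)‖) ≤ (W / l + l) / 4 * (r ^ 4 * t) := by
    calc √W / 2 * (r ^ 5 * ‖dilogTail 4 (r * u)‖)
        = √W / 2 * (r ^ 4 * (r * ‖dilogTail 4 (r * u)‖)) := by ring
      _ ≤ (W / l + l) / 4 * (r ^ 4 * t) := by gcongr
  have hcubic := mul_pos hr₀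
    (cubic_pos_of_bernstein_pos hr₀.le hr₁ (div_pos hW₀ four_pos) h₁ h₂ h₃)
  linarith [le_fk_one_sq hu hr₀.le hr₁ hW]

theorem pow_four_lt_fk_one_sq_of_obtuse (hlo : -0.69 ≤ u.re) (hhi : u.re ≤ -0.375) :
    0.0658 * r ^ 4 < fk 1 (r * u) ^ 2 := by
  have a := sub_nonneg.2 hlo
  have b := sub_nonneg.2 hhi
  have h := lt_fk_one_sq_of_bernstein_pos hu hr₀ hr₁ rfl (by linarith) (l := 0.82) (B₁ := 0)
    (B₃ := 0.0658) (by norm_num)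
    (mul_norm_dilogTail_four_le hu hr₀ hr₁ (g := 1.6583) (by norm_num) (by linarith))
    (by nlinarith) (by nlinarith [mul_nonneg a b]) (by
      norm_num
      nlinarith [mul_nonneg a b, mul_nonneg (mul_nonneg a b) a, mul_nonneg (mul_nonneg a b) b,
        mul_nonneg (mul_nonneg a b) (mul_nonneg a b), mul_nonneg (mul_nonneg a b) (mul_nonneg a a),
        mul_nonneg (mul_nonneg a b) (mul_nonneg b b)])
  linarith

theorem pow_four_lt_fk_one_sq_of_nearly_right (hlo : -0.4 ≤ u.re) (hhi : u.re ≤ 0) :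
    0.10282 * r ^ 4 < fk 1 (r * u) ^ 2 := by
  have a := sub_nonneg.2 hlo
  have b := sub_nonneg.2 hhi
  have h := lt_fk_one_sq_of_bernstein_pos hu hr₀ hr₁ rfl (by linarith) (l := 1.2) (B₁ := 0)
    (B₃ := 0.10282) (by norm_num)
    (mul_norm_dilogTail_four_le hu hr₀ hr₁ (g := 1.4142) (by norm_num) (by linarith))
    (by nlinarith) (by nlinarith [mul_nonneg a b]) (by
      norm_num
      nlinarith [mul_nonneg a b, mul_nonneg (mul_nonneg a b) a, mul_nonneg (mul_nonneg a b) b,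
        mul_nonneg (mul_nonneg a b) (mul_nonneg a b), mul_nonneg (mul_nonneg a b) (mul_nonneg a a),
        mul_nonneg (mul_nonneg a b) (mul_nonneg b b)])
  linarith

theorem sq_lt_fk_one_sq_of_acute_of_re_le (hlo : -0.048 ≤ u.re) (hhi : u.re ≤ 0.2) :
    0.2632 * r ^ 2 < fk 1 (r * u) ^ 2 := by
  have a := sub_nonneg.2 hlo
  have b := sub_nonneg.2 hhi
  have h := lt_fk_one_sq_of_bernstein_pos hu hr₀ hr₁ rfl (by linarith) (l := 1.4) (B₁ := 0.2632)
    (B₃ := 0) (by norm_num)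
    (mul_norm_dilogTail_four_le hu hr₀ hr₁ (g := 1.2649) (by norm_num) (by linarith))
    (by nlinarith) (by nlinarith [mul_nonneg a b]) (by
      norm_num
      nlinarith [mul_nonneg a b, mul_nonneg (mul_nonneg a b) a, mul_nonneg (mul_nonneg a b) b,
        mul_nonneg (mul_nonneg a b) (mul_nonneg a b), mul_nonneg (mul_nonneg a b) (mul_nonneg a a),
        mul_nonneg (mul_nonneg a b) (mul_nonneg b b)])
  linarith

theorem sq_lt_fk_one_sq_of_acute_of_le_re (hlo : 0.2 ≤ u.re) (hhi : u.re ≤ 0.71) :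
    0.2632 * r ^ 2 < fk 1 (r * u) ^ 2 := by
  have a := sub_nonneg.2 hlo
  have b := sub_nonneg.2 hhi
  have h := lt_fk_one_sq_of_bernstein_pos hu hr₀ hr₁ rfl (by linarith) (l := 1.7) (B₁ := 0.2632)
    (B₃ := 0) (by norm_num)
    (mul_norm_dilogTail_four_le hu hr₀ hr₁ (g := 0.7615) (by norm_num) (by linarith))
    (by nlinarith) (by nlinarith [mul_nonneg a b]) (by
      norm_num
      nlinarith [mul_nonneg a b, mul_nonneg (mul_nonneg a b) a, mul_nonneg (mul_nonneg a b) b,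
        mul_nonneg (mul_nonneg a b) (mul_nonneg a b), mul_nonneg (mul_nonneg a b) (mul_nonneg a a),
        mul_nonneg (mul_nonneg a b) (mul_nonneg b b)])
  linarith

theorem sq_lt_fk_one_sq_of_acute (hlo : -0.048 ≤ u.re) (hhi : u.re ≤ 0.71) :
    0.2632 * r ^ 2 < fk 1 (r * u) ^ 2 :=
  (le_total u.re 0.2).elim (sq_lt_fk_one_sq_of_acute_of_re_le hu hr₀ hr₁ hlo)
    (sq_lt_fk_one_sq_of_acute_of_le_re hu hr₀ hr₁ · hhi)

theorem sq_lt_fk_one_sq_of_small (hlo : 0.69 ≤ u.re) (hhi : u.re ≤ 1) :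
    0.4113 * r ^ 2 < fk 1 (r * u) ^ 2 := by
  have hnorm : ‖(r * u : ℂ)‖ = r := by
    rw [norm_mul, norm_real, hu, mul_one, Real.norm_of_nonneg hr₀.le]
  have ht : r * ‖dilogTail 4 (r * u)‖ ≤ 0.2214 := by
    refine (mul_le_of_le_one_left (norm_nonneg _) hr₁).trans
      ((norm_dilogTail_le 4 (hnorm.trans_le hr₁)).trans ?_)
    norm_num [Finset.sum_range_succ]
    linarith [pi_sq_div_six_lt]
  have a := sub_nonneg.2 hlo
  have b := sub_nonneg.2 hhi
  have h := lt_fk_one_sq_of_bernstein_pos hu hr₀ hr₁ rfl (by linarith) (l := 2) (B₁ := 0.4113)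
    (B₃ := 0) (by norm_num)
    ht
    (by nlinarith) (by nlinarith [mul_nonneg a b]) (by
      norm_num
      nlinarith [mul_nonneg a b, mul_nonneg (mul_nonneg a b) a, mul_nonneg (mul_nonneg a b) b,
        mul_nonneg (mul_nonneg a b) (mul_nonneg a b), mul_nonneg (mul_nonneg a b) (mul_nonneg a a),
        mul_nonneg (mul_nonneg a b) (mul_nonneg b b)])
  linarith

end LowerBound

/-! ### The functions `fk k` with `4 ≤ k` never dominate -/

theorem fk_sq_le_of_five_le {k : ℕ} (hk : 5 ≤ k) {x : ℂ} (hx : ‖x‖ ≤ 1) :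
    fk k x ^ 2 ≤ 0.0658 * ‖x‖ ^ 4 := by
  have hk' : (5 : ℝ) ≤ k := by exact_mod_cast hk
  calc fk k x ^ 2 ≤ 1.645 * ‖x‖ ^ k / (k : ℝ) ^ 2 := fk_sq_le (by lia) hx
    _ ≤ 1.645 * ‖x‖ ^ 4 / 5 ^ 2 := by
      gcongr 1.645 * ?_ / ?_ ^ 2
      exact pow_le_pow_of_le_one (norm_nonneg x) hx (by lia)
    _ = 0.0658 * ‖x‖ ^ 4 := by ring

theorem fk_sq_le_of_four_le {k : ℕ} (hk : 4 ≤ k) {x : ℂ} (hx : ‖x‖ ≤ 1) :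
    fk k x ^ 2 ≤ 0.10282 * ‖x‖ ^ 4 := by
  have hpos : 0 ≤ ‖x‖ ^ 4 := by positivity
  rcases hk.eq_or_lt with rfl | hk
  · refine (fk_sq_le four_ne_zero hx).trans ?_
    push_cast
    linarith
  · linarith [fk_sq_le_of_five_le hk hx]

theorem fk_four_sq_le_of_re_nonpos {x : ℂ} (hx : ‖x‖ ≤ 1) (hre : (x ^ 4).re ≤ 0) :
    fk 4 x ^ 2 ≤ 0.0658 * ‖x‖ ^ 4 := by
  have hx₄ : ‖x ^ 4‖ ≤ 1 := by rw [norm_pow]; exact pow_le_one₀ (norm_nonneg _) hx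
  have hnorm := norm_dilog_le hx₄
  rw [norm_pow] at hnorm
  rw [fk_sq, div_le_iff₀ (by norm_num)]
  push_cast
  linarith [dilog_re_nonpos hx₄ hre, pow_nonneg (norm_nonneg x) 4]

theorem fk_two_sq (x : ℂ) : fk 2 x ^ 2 = fk 1 (x ^ 2) ^ 2 / 4 := by
  simp only [fk_sq, pow_one]
  push_cast
  ring

section Dominance

variable {u : ℂ} (hu : ‖u‖ = 1) {r : ℝ} (hr₀ : 0 < r) (hr₁ : r ≤ 1)
include hu hr₀ hr₁

theorem lt_fk_two_sq_of_acute (hlo : -0.048 ≤ (u ^ 2).re) (hhi : (u ^ 2).re ≤ 0.71) :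
    0.0658 * r ^ 4 < fk 2 (r * u) ^ 2 := by
  have h := sq_lt_fk_one_sq_of_acute (u := u ^ 2) (r := r ^ 2) (by rw [norm_pow, hu, one_pow])
    (by positivity) (pow_le_one₀ hr₀.le hr₁) hlo hhi
  rw [fk_two_sq, mul_pow, ← ofReal_pow]
  linarith

theorem lt_fk_two_sq_of_small (hlo : 0.69 ≤ (u ^ 2).re) :
    0.10282 * r ^ 4 < fk 2 (r * u) ^ 2 := by
  have hnorm : ‖u ^ 2‖ = 1 := by rw [norm_pow, hu, one_pow]
  have h := sq_lt_fk_one_sq_of_small (r := r ^ 2) hnorm (by positivity) (pow_le_one₀ hr₀.le hr₁)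
    hlo ((re_le_norm _).trans_eq hnorm)
  rw [fk_two_sq, mul_pow, ← ofReal_pow]
  linarith [pow_pos hr₀ 4]

theorem lt_fk_one_sq_of_neg_two_fifths_le_re (hlo : -0.4 ≤ u.re) :
    0.10282 * r ^ 4 < fk 1 (r * u) ^ 2 := by
  have hr : r ^ 4 ≤ r ^ 2 := pow_le_pow_of_le_one hr₀.le hr₁ (by norm_num)
  rcases le_total u.re 0 with h | h
  · exact pow_four_lt_fk_one_sq_of_nearly_right hu hr₀ hr₁ hlo h
  rcases le_total u.re 0.7 with h' | h'
  · linarith [sq_lt_fk_one_sq_of_acute hu hr₀ hr₁ (by linarith) (by linarith), sq_nonneg r]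
  · linarith [sq_lt_fk_one_sq_of_small hu hr₀ hr₁ (by linarith) ((re_le_norm u).trans_eq hu),
      sq_nonneg r]

theorem exists_fk_sq_le_and_lt_max_of_polar :
    ∃ B < max (fk 1 (r * u) ^ 2) (fk 2 (r * u) ^ 2), ∀ k ≥ 4, fk k (r * u) ^ 2 ≤ B := by
  have hnorm : ‖(r * u : ℂ)‖ = r := by
    rw [norm_mul, norm_real, hu, mul_one, Real.norm_of_nonneg hr₀.le]
  have hcrude : ∀ k ≥ 4, fk k (r * u) ^ 2 ≤ 0.10282 * r ^ 4 := fun k hk ↦ by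
    simpa only [hnorm] using fk_sq_le_of_four_le hk (hnorm.trans_le hr₁)
  have huu : u.re ^ 2 + u.im ^ 2 = 1 := by
    rw [← one_pow 2, ← hu, Complex.sq_norm, normSq_apply]; ring
  have hre₂ : (u ^ 2).re = 2 * u.re ^ 2 - 1 := by simp only [pow_two, mul_re]; linarith
  rcases le_total (-0.4) u.re with h₁ | h₁
  · exact ⟨_, lt_max_of_lt_left (lt_fk_one_sq_of_neg_two_fifths_le_re hu hr₀ hr₁ h₁), hcrude⟩
  rcases le_total u.re (-0.92) with h₂ | h₂
  · exact ⟨_, lt_max_of_lt_right (lt_fk_two_sq_of_small hu hr₀ hr₁ (by nlinarith only [hre₂, h₂])),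
      hcrude⟩
  have hre₄ : ((r * u) ^ 4).re ≤ 0 := by
    have hre : (u ^ 4).re = 2 * (u ^ 2).re ^ 2 - 1 := by
      have hnorm₂ : (u ^ 2).re ^ 2 + (u ^ 2).im ^ 2 = 1 := by
        rw [← one_pow 4, ← hu, ← normSq_add_mul_I, re_add_im, normSq_eq_norm_sq, norm_pow]; ring
      rw [show u ^ 4 = u ^ 2 * u ^ 2 by ring, mul_re]
      linarith
    rw [mul_pow, ← ofReal_pow, re_ofReal_mul, hre, hre₂]
    refine mul_nonpos_of_nonneg_of_nonpos (by positivity) ?_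
    have hlo : 0.16 ≤ u.re ^ 2 := by nlinarith only [h₁]
    have hhi : u.re ^ 2 ≤ 0.8464 := by nlinarith only [h₁, h₂]
    nlinarith only [hlo, hhi]
  refine ⟨0.0658 * r ^ 4, ?_, fun k hk ↦ ?_⟩
  · rcases le_total u.re (-0.69) with h₃ | h₃
    · exact lt_max_of_lt_right (lt_fk_two_sq_of_acute hu hr₀ hr₁ (by nlinarith only [hre₂, h₃])
        (by nlinarith only [hre₂, h₂, h₃]))
    · exact lt_max_of_lt_left (pow_four_lt_fk_one_sq_of_obtuse hu hr₀ hr₁ h₃ (by linarith))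
  · rw [← hnorm]
    rcases hk.eq_or_lt with rfl | hk
    · simpa only [hnorm] using fk_four_sq_le_of_re_nonpos (hnorm.trans_le hr₁) hre₄
    · simpa only [hnorm] using fk_sq_le_of_five_le hk (hnorm.trans_le hr₁)

end Dominance

theorem exists_fk_sq_le_and_lt_max {x : ℂ} (hx₀ : x ≠ 0) (hx : ‖x‖ ≤ 1) :
    ∃ B < max (fk 1 x ^ 2) (fk 2 x ^ 2), ∀ k ≥ 4, fk k x ^ 2 ≤ B := by
  have hr : 0 < ‖x‖ := norm_pos_iff.2 hx₀
  have h := exists_fk_sq_le_and_lt_max_of_polar (u := x / ‖x‖) (by simp [hr.ne']) hr hx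
  rwa [mul_div_cancel₀ _ (ofReal_ne_zero.2 hr.ne')] at h

/-! ### Strict dominance in the interior of the regions -/

theorem eventually_eq_of_eventually_re_nonneg {g : ℂ → ℂ} {z : ℂ} (hg : AnalyticAt ℂ g z)
    (hre : ∀ᶠ x in 𝓝 z, 0 ≤ (g x).re) (hz : (g z).re = 0) : ∀ᶠ x in 𝓝 z, g x = g z := by
  refine hg.eventually_constant_or_nhds_le_map_nhds.resolve_right fun hopen ↦ ?_
  have hmem : g z ∈ interior {w : ℂ | 0 ≤ w.re} :=
    mem_interior_iff_mem_nhds.2 (hopen (mem_map.2 hre))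
  rw [Complex.interior_setOfPred_le_re] at hmem
  exact hmem.ne' hz

theorem not_eventually_dilog_pow_eq_of_lt {i j : ℕ} (hi : i ≠ 0) (hij : i < j) :
    ¬ ∀ᶠ x in 𝓝 (0 : ℂ), dilog (x ^ i) / (i : ℂ) ^ 2 = dilog (x ^ j) / (j : ℂ) ^ 2 := by
  intro h
  have hnorm : ∀ᶠ x in 𝓝 (0 : ℂ), ‖x‖ ≤ 1 := by
    filter_upwards [Metric.ball_mem_nhds (0 : ℂ) one_pos] with x hx
    exact (mem_ball_zero_iff.1 hx).le
  have hpow (k : ℕ) {x : ℂ} (hx : ‖x‖ ≤ 1) : ‖x ^ k‖ ≤ 1 := by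
    rw [norm_pow]; exact pow_le_one₀ (norm_nonneg x) hx
  have hlower : (fun x : ℂ ↦ x ^ i) =O[𝓝 0] fun x ↦ dilog (x ^ i) / (i : ℂ) ^ 2 := by
    refine .of_bound ((i : ℝ) ^ 2 / 0.355) ?_
    filter_upwards [hnorm] with x hx
    have hbound := le_norm_dilog (hpow i hx)
    rw [norm_div, norm_pow (i : ℂ), Complex.norm_natCast, div_mul_div_comm,
      mul_comm 0.355, mul_div_mul_left _ _ (by positivity), le_div_iff₀ (by norm_num)]
    linarith
  have hupper : (fun x : ℂ ↦ dilog (x ^ j) / (j : ℂ) ^ 2) =O[𝓝 0] fun x ↦ x ^ j := by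
    refine .of_bound (1.645 / (j : ℝ) ^ 2) ?_
    filter_upwards [hnorm] with x hx
    rw [norm_div, norm_pow (j : ℂ), Complex.norm_natCast, div_mul_eq_mul_div]
    gcongr
    exact norm_dilog_le (hpow j hx)
  have hlittle : (fun x : ℂ ↦ x ^ i) =o[𝓝 0] fun x ↦ x ^ i :=
    (hlower.trans (hupper.congr' (h.mono fun x hx ↦ hx.symm) .rfl)).trans_isLittleO
      (Asymptotics.isLittleO_pow_pow hij)
  refine Asymptotics.isLittleO_irrefl ?_ hlittle
  have hne : ∃ᶠ x in 𝓝[≠] (0 : ℂ), x ∈ ({0}ᶜ : Set ℂ) := eventually_mem_nhdsWithin.frequently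
  exact (hne.mono fun x hx ↦ pow_ne_zero i hx).filter_mono nhdsWithin_le_nhds

theorem not_eventually_dilog_pow_eq {i j : ℕ} (hi : i ≠ 0) (hj : j ≠ 0) (hij : i ≠ j) :
    ¬ ∀ᶠ x in 𝓝 (0 : ℂ), dilog (x ^ i) / (i : ℂ) ^ 2 = dilog (x ^ j) / (j : ℂ) ^ 2 :=
  hij.lt_or_gt.elim (not_eventually_dilog_pow_eq_of_lt hi) fun hji h ↦
    not_eventually_dilog_pow_eq_of_lt hj hji (h.mono fun _ ↦ Eq.symm)

/-- The complex number `√(Li₂(x ^ k)) / k`, with real part `fk k x`. In the circle method the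
exponent `saddle k x ^ 2 / w + n * w` at a `k`-th root of unity has its saddle point at
`w = saddle k x / √n`. -/
noncomputable def saddle (k : ℕ) (x : ℂ) : ℂ :=
  dilog (x ^ k) ^ (1 / 2 : ℂ) / k

theorem saddle_re (k : ℕ) (x : ℂ) : (saddle k x).re = fk k x := by
  rw [saddle, fk, div_natCast_re, one_div_mul_eq_div]

theorem saddle_sq (k : ℕ) (x : ℂ) : saddle k x ^ 2 = dilog (x ^ k) / (k : ℂ) ^ 2 := by
  rw [saddle, div_pow, ← cpow_nat_mul]; norm_num

theorem not_eventually_saddle_sub_eq {i j : ℕ} (hi : i ≠ 0) (hj : j ≠ 0) (hij : i ≠ j)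
    {z : ℂ} (hz : ‖z‖ < 1) (c : ℂ) : ¬ ∀ᶠ x in 𝓝 z, saddle i x - saddle j x = c := by
  intro hconst
  let A (k : ℕ) (x : ℂ) : ℂ := dilog (x ^ k) / (k : ℂ) ^ 2
  have hA_analytic {k : ℕ} (hk : k ≠ 0) : AnalyticOnNhd ℂ (A k) (Metric.ball 0 1) :=
    fun x hx ↦ (analyticOnNhd_dilog_pow hk x hx).div_const
  have hA_zero {k : ℕ} (hk : k ≠ 0) : A k 0 = 0 := by simp [A, hk, dilog_zero]
  -- Squaring `√A i = √A j + c` twice removes the square roots.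
  have hlocal : (fun x ↦ (A i x - A j x - c ^ 2) ^ 2) =ᶠ[𝓝 z] fun x ↦ 4 * c ^ 2 * A j x := by
    filter_upwards [hconst] with x hx
    simp only [A, ← saddle_sq]
    rw [sub_eq_iff_eq_add'.1 hx]
    ring
  have hglobal := AnalyticOnNhd.eqOn_of_preconnected_of_eventuallyEq
    ((((hA_analytic hi).sub (hA_analytic hj)).sub analyticOnNhd_const).pow 2)
    (analyticOnNhd_const.mul (hA_analytic hj)) (convex_ball (0 : ℂ) 1).isPreconnected
    (mem_ball_zero_iff.2 hz) hlocal
  have hc : c = 0 := by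
    simpa [hA_zero hi, hA_zero hj] using hglobal (Metric.mem_ball_self one_pos)
  refine not_eventually_dilog_pow_eq hi hj hij ?_
  filter_upwards [Metric.ball_mem_nhds (0 : ℂ) one_pos] with x hx
  simpa [hc, sub_eq_zero] using hglobal hx

theorem fk_lt_of_eventually_le {i j : ℕ} (hi : i ≠ 0) (hj : j ≠ 0) (hij : i ≠ j) {z : ℂ}
    (hz : ‖z‖ < 1) (hpos : 0 < fk i z) (hle : ∀ᶠ x in 𝓝 z, fk j x ≤ fk i x) :
    fk j z < fk i z := by
  refine hle.self_of_nhds.lt_of_ne fun heq ↦ ?_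
  have hanalytic {k : ℕ} (hk : k ≠ 0) (hpos : 0 < fk k z) : AnalyticAt ℂ (saddle k) z :=
    ((analyticOnNhd_dilog_pow hk z (mem_ball_zero_iff.2 hz)).cpow analyticAt_const
      (dilog_pow_mem_slitPlane hpos)).div_const
  refine not_eventually_saddle_sub_eq hi hj hij hz _ (eventually_eq_of_eventually_re_nonneg
    ((hanalytic hi hpos).sub (hanalytic hj (heq ▸ hpos))) ?_ ?_)
  · filter_upwards [hle] with x hx
    simpa only [Pi.sub_apply, sub_re, saddle_re, sub_nonneg] using hx
  · simpa only [Pi.sub_apply, sub_re, saddle_re, sub_eq_zero] using heq.symm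

/-- `IsDominant k₀ z` says that `fk k₀ z` is positive and strictly exceeds all other `fk k z`; since
infinitely many indices compete, the gap between the squares is required to be uniform. -/
def IsDominant (k₀ : ℕ) (z : ℂ) : Prop :=
  0 < fk k₀ z ∧ ∃ δ > 0, ∀ k ≠ 0, k ≠ k₀ → fk k z ^ 2 ≤ fk k₀ z ^ 2 - δ

theorem isDominant_of_eventually_le {k₀ : ℕ} (hk₀ : k₀ ≠ 0) {z : ℂ} (hz₀ : z ≠ 0) (hz : ‖z‖ < 1)
    (h : ∀ j ∈ ({1, 2, 3} : Finset ℕ), ∀ᶠ x in 𝓝 z, fk j x ≤ fk k₀ x) : IsDominant k₀ z := by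
  obtain ⟨B, hB, hB'⟩ := exists_fk_sq_le_and_lt_max hz₀ hz.le
  have hle (j : ℕ) (hj : j ∈ ({1, 2, 3} : Finset ℕ)) : fk j z ^ 2 ≤ fk k₀ z ^ 2 :=
    pow_le_pow_left₀ (fk_nonneg j z) (h j hj).self_of_nhds 2
  have hBk₀ : B < fk k₀ z ^ 2 := hB.trans_le (max_le (hle 1 (by simp)) (hle 2 (by simp)))
  have hpos : 0 < fk k₀ z := (fk_nonneg k₀ z).lt_of_ne' fun hzero ↦ by
    have hB₀ : 0 ≤ B := (sq_nonneg _).trans (hB' 4 le_rfl)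
    rw [hzero, zero_pow two_ne_zero] at hBk₀
    exact hBk₀.not_ge hB₀
  have hgap_small : ∀ᶠ δ in 𝓝[>] (0 : ℝ), ∀ j ∈ ({1, 2, 3} : Finset ℕ), j ≠ k₀ →
      δ < fk k₀ z ^ 2 - fk j z ^ 2 := by
    refine (Finset.eventually_all _).2 fun j hj ↦ eventually_imp_distrib_left.2 fun hjk ↦ ?_
    have hlt := fk_lt_of_eventually_le hk₀ (by rintro rfl; simp at hj) hjk.symm hz hpos (h j hj)
    exact mem_nhdsWithin_of_mem_nhds (gt_mem_nhds (sub_pos.2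
      (pow_lt_pow_left₀ hlt (fk_nonneg j z) two_ne_zero)))
  have hgap_large : ∀ᶠ δ in 𝓝[>] (0 : ℝ), δ < fk k₀ z ^ 2 - B :=
    mem_nhdsWithin_of_mem_nhds (gt_mem_nhds (sub_pos.2 hBk₀))
  obtain ⟨δ, hδ₀, hδ₁, hδ₂⟩ := (eventually_mem_nhdsWithin.and (hgap_small.and hgap_large)).exists
  refine ⟨hpos, δ, hδ₀, fun k hk hkk₀ ↦ ?_⟩
  rcases lt_or_ge k 4 with hk₄ | hk₄
  · linarith [hδ₁ k (by simp only [Finset.mem_insert, Finset.mem_singleton]; lia) hkk₀]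
  · linarith [hB' k hk₄]

theorem exists_isDominant {z : ℂ} (hz₀ : z ≠ 0) (hz : ‖z‖ < 1)
    (h : z ∈ interior R1 ∨ z ∈ interior R2 ∨ z ∈ interior R3) :
    IsDominant 1 z ∨ IsDominant 2 z ∨ IsDominant 3 z := by
  have hdom {k₀ : ℕ} (hk₀ : k₀ ≠ 0) {R : Set ℂ} (hR : z ∈ interior R)
      (hle : ∀ x ∈ R, fk 1 x ≤ fk k₀ x ∧ fk 2 x ≤ fk k₀ x ∧ fk 3 x ≤ fk k₀ x) :
      IsDominant k₀ z := by
    have hev : ∀ᶠ x in 𝓝 z, x ∈ R := mem_interior_iff_mem_nhds.1 hR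
    refine isDominant_of_eventually_le hk₀ hz₀ hz ?_
    simp only [Finset.forall_mem_insert, Finset.mem_singleton, forall_eq]
    exact ⟨hev.mono fun x hx ↦ (hle x hx).1, hev.mono fun x hx ↦ (hle x hx).2.1,
      hev.mono fun x hx ↦ (hle x hx).2.2⟩
  exact h.imp (hdom one_ne_zero · fun x hx ↦ ⟨le_rfl, hx.2.1, hx.2.2⟩)
    (.imp (hdom two_ne_zero · fun x hx ↦ ⟨hx.2.1, le_rfl, hx.2.2⟩)
      (hdom three_ne_zero · fun x hx ↦ ⟨hx.2.1, hx.2.2, le_rfl⟩))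

theorem fk_three_le_fk_one_of_im_eq_zero {z : ℂ} (hz : ‖z‖ ≤ 1) (him : z.im = 0) :
    fk 3 z ≤ fk 1 z := by
  obtain ⟨a, rfl⟩ : ∃ a : ℝ, z = a := ⟨z.re, Complex.ext rfl him⟩
  rcases lt_or_ge a 0 with ha | ha
  · suffices h : ¬ 0 < fk 3 (a : ℂ) from (not_lt.1 h).trans (fk_nonneg 1 _)
    intro hpos
    have hslit := dilog_pow_mem_slitPlane hpos
    rw [← ofReal_pow, mem_slitPlane_iff, dilog_ofReal_im] at hslit
    have hnorm : ‖((a ^ 3 : ℝ) : ℂ)‖ ≤ 1 := by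
      rw [ofReal_pow, norm_pow]; exact pow_le_one₀ (norm_nonneg _) hz
    have hre : (((a ^ 3 : ℝ) : ℂ)).re ≤ 0 := by
      rw [ofReal_re]; exact (Odd.pow_neg (by decide) ha).le
    exact hslit.elim (dilog_re_nonpos hnorm hre).not_gt (· rfl)
  · have hnorm : ‖(a : ℂ)‖ = a := by rw [norm_real, Real.norm_of_nonneg ha]
    have ha₁ : a ≤ 1 := hnorm ▸ hz
    refine (pow_le_pow_iff_left₀ (fk_nonneg 3 _) (fk_nonneg 1 _) two_ne_zero).1 ?_
    have hre : 0.355 * a ≤ (dilog a).re := by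
      have h := (abs_le.1 ((abs_re_le_norm _).trans (norm_dilog_sub_le hz))).1
      rw [sub_re, ofReal_re, hnorm] at h
      linarith
    calc fk 3 a ^ 2 ≤ 1.645 * a ^ 3 / (3 : ℕ) ^ 2 := by
          simpa only [hnorm] using fk_sq_le three_ne_zero hz
      _ ≤ 0.355 * a := by
          have : a ^ 3 ≤ a := pow_le_of_le_one ha ha₁ three_ne_zero
          push_cast
          linarith
      _ ≤ (‖dilog a‖ + (dilog a).re) / 2 := by
          linarith [re_le_norm (dilog (a : ℂ))]
      _ = fk 1 a ^ 2 := by rw [fk_sq]; norm_num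

theorem IsDominant.im_ne_zero {z : ℂ} (hz : ‖z‖ ≤ 1) (h : IsDominant 3 z) : z.im ≠ 0 := by
  obtain ⟨-, δ, hδ, hgap⟩ := h
  intro him
  have := pow_le_pow_left₀ (fk_nonneg 3 z) (fk_three_le_fk_one_of_im_eq_zero hz him) 2
  linarith [hgap 1 one_ne_zero (by norm_num)]

/-! ### The generating function of the partition polynomials -/

/-- The power series of `1 / (1 - z X ^ (i + 1))`: the contribution of the part `i + 1` to the
generating function of partitions in which every part is weighted by `z`. -/
noncomputable def partFactor (z : ℂ) (i : ℕ) : PowerSeries ℂ :=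
  .mk fun n ↦ if i + 1 ∣ n then z ^ (n / (i + 1)) else 0

open scoped PowerSeries.WithPiTopology in
theorem one_add_tsum_smul_X_pow (z : ℂ) (i : ℕ) :
    1 + ∑' j : ℕ, z ^ (j + 1) • (PowerSeries.X : PowerSeries ℂ) ^ ((i + 1) * (j + 1)) =
      partFactor z i := by
  ext n
  rw [map_add, (Nat.Partition.summable_genFun_term (fun _ c ↦ z ^ c) i).map_tsum _
    (PowerSeries.WithPiTopology.continuous_coeff ℂ n), partFactor, PowerSeries.coeff_mk]
  simp only [map_smul, PowerSeries.coeff_X_pow, PowerSeries.coeff_one]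
  rcases Nat.eq_zero_or_pos n with rfl | hn
  · simp
  by_cases hdvd : i + 1 ∣ n
  · obtain ⟨q, rfl⟩ := hdvd
    obtain ⟨q, rfl⟩ := Nat.exists_eq_add_one_of_ne_zero (Nat.pos_of_mul_pos_left hn).ne'
    rw [tsum_eq_single q fun j hj ↦ by simp [hj.symm]]
    simp
  · have h (j : ℕ) : n ≠ (i + 1) * (j + 1) := fun h ↦ hdvd ⟨_, h⟩
    simp [hdvd, hn.ne', h]

open scoped PowerSeries.WithPiTopology in
theorem tendsto_coeff_prod_partFactor (z : ℂ) (n : ℕ) :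
    Tendsto (fun N ↦ (∏ i ∈ range N, partFactor z i).coeff n) atTop
      (𝓝 (∑ p : n.Partition, z ^ p.parts.card)) := by
  have h := (PowerSeries.WithPiTopology.tendsto_iff_coeff_tendsto ..).1
    (Nat.Partition.hasProd_genFun fun _ c ↦ z ^ c).tendsto_prod_nat n
  simpa only [one_add_tsum_smul_X_pow, Nat.Partition.coeff_genFun, Finsupp.prod,
    Finset.prod_pow_eq_pow_sum, Multiset.toFinsupp_support, Multiset.toFinsupp_apply,
    Multiset.toFinset_sum_count_eq] using h

theorem card_parts_mem_Icc {n : ℕ} (hn : n ≠ 0) (p : n.Partition) :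
    p.parts.card ∈ Finset.Icc 1 n := by
  refine Finset.mem_Icc.2 ⟨Nat.one_le_iff_ne_zero.2 fun h ↦ hn ?_, ?_⟩
  · rw [← p.parts_sum, Multiset.card_eq_zero.1 h, Multiset.sum_zero]
  · have h : p.parts.card • 1 ≤ p.parts.sum := Multiset.card_nsmul_le_sum fun _ ↦ p.parts_pos
    rwa [p.parts_sum, smul_eq_mul, mul_one] at h

theorem sum_pow_card_parts (z : ℂ) {n : ℕ} (hn : n ≠ 0) :
    ∑ p : n.Partition, z ^ p.parts.card = F n z := by
  rw [F, ← Finset.sum_fiberwise_of_maps_to fun p _ ↦ card_parts_mem_Icc hn p]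
  refine Finset.sum_congr rfl fun k _ ↦ ?_
  rw [Finset.sum_congr rfl fun p hp ↦ by rw [(Finset.mem_filter.1 hp).2], Finset.sum_const,
    nsmul_eq_mul, partsCount, Nat.card_eq_fintype_card, Fintype.card_subtype]

/-- The power series `φ` converges absolutely at `u`, with sum `v`. -/
def HasAbsEval (φ : PowerSeries ℂ) (u v : ℂ) : Prop :=
  Summable (fun n ↦ ‖φ.coeff n * u ^ n‖) ∧ HasSum (fun n ↦ φ.coeff n * u ^ n) v

theorem hasAbsEval_one (u : ℂ) : HasAbsEval 1 u 1 := by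
  have h (n : ℕ) (hn : n ≠ 0) : (1 : PowerSeries ℂ).coeff n * u ^ n = 0 := by
    rw [PowerSeries.coeff_one, if_neg hn, zero_mul]
  exact ⟨(hasSum_single 0 fun n hn ↦ by rw [h n hn, norm_zero]).summable,
    by simpa using hasSum_single 0 h⟩

theorem HasAbsEval.mul {φ ψ : PowerSeries ℂ} {u v w : ℂ} (hφ : HasAbsEval φ u v)
    (hψ : HasAbsEval ψ u w) : HasAbsEval (φ * ψ) u (v * w) := by
  have hcoeff (n : ℕ) : ∑ p ∈ Finset.HasAntidiagonal.antidiagonal n,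
      φ.coeff p.1 * u ^ p.1 * (ψ.coeff p.2 * u ^ p.2) = (φ * ψ).coeff n * u ^ n := by
    rw [PowerSeries.coeff_mul, Finset.sum_mul]
    refine Finset.sum_congr rfl fun p hp ↦ ?_
    rw [← Finset.HasAntidiagonal.mem_antidiagonal.1 hp, pow_add]
    ring
  have hsummable := summable_norm_sum_mul_antidiagonal_of_summable_norm hφ.1 hψ.1
  have hprod := tsum_mul_tsum_eq_tsum_sum_antidiagonal_of_summable_norm hφ.1 hψ.1
  simp only [hcoeff] at hsummable hprod
  rw [hφ.2.tsum_eq, hψ.2.tsum_eq] at hprod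
  exact ⟨hsummable, hprod ▸ hsummable.of_norm.hasSum⟩

theorem HasAbsEval.prod {ι : Type*} {s : Finset ι} {φ : ι → PowerSeries ℂ} {u : ℂ} {v : ι → ℂ}
    (h : ∀ i ∈ s, HasAbsEval (φ i) u (v i)) : HasAbsEval (∏ i ∈ s, φ i) u (∏ i ∈ s, v i) := by
  induction s using Finset.cons_induction with
  | empty => exact hasAbsEval_one u
  | cons a s ha ih =>
    rw [Finset.prod_cons, Finset.prod_cons]
    exact (h a (Finset.mem_cons_self a s)).mul (ih fun i hi ↦ h i (Finset.mem_cons_of_mem hi))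

theorem norm_mul_pow_lt_one {z u : ℂ} (hz : ‖z‖ < 1) (hu : ‖u‖ ≤ 1) (i : ℕ) : ‖z * u ^ i‖ < 1 := by
  rw [norm_mul, norm_pow]
  exact (mul_le_of_le_one_right (norm_nonneg z) (pow_le_one₀ (norm_nonneg u) hu)).trans_lt hz

theorem one_sub_ne_zero_of_norm_lt_one {w : ℂ} (hw : ‖w‖ < 1) : 1 - w ≠ 0 := fun h ↦
  hw.ne (by rw [← sub_eq_zero.1 h, norm_one])

theorem hasAbsEval_partFactor {z u : ℂ} (hz : ‖z‖ < 1) (hu : ‖u‖ ≤ 1) (i : ℕ) :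
    HasAbsEval (partFactor z i) u (1 - z * u ^ (i + 1))⁻¹ := by
  have hlt := norm_mul_pow_lt_one hz hu (i + 1)
  have hinj : Function.Injective fun j : ℕ ↦ (i + 1) * j := mul_right_injective₀ i.succ_ne_zero
  have hzero (n : ℕ) (hn : n ∉ Set.range fun j : ℕ ↦ (i + 1) * j) :
      (partFactor z i).coeff n * u ^ n = 0 := by
    rw [partFactor, PowerSeries.coeff_mk, if_neg fun ⟨q, hq⟩ ↦ hn ⟨q, hq.symm⟩, zero_mul]
  have hcoeff (j : ℕ) : (partFactor z i).coeff ((i + 1) * j) * u ^ ((i + 1) * j) =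
      (z * u ^ (i + 1)) ^ j := by
    rw [partFactor, PowerSeries.coeff_mk, if_pos (Dvd.intro _ rfl),
      Nat.mul_div_cancel_left _ i.succ_pos, mul_pow, pow_mul]
  constructor
  · rw [← hinj.summable_iff fun n hn ↦ by rw [hzero n hn, norm_zero]]
    simpa only [Function.comp_def, hcoeff, norm_pow] using
      summable_geometric_of_lt_one (norm_nonneg _) hlt
  · rw [← hinj.hasSum_iff hzero]
    simpa only [Function.comp_def, hcoeff] using hasSum_geometric_of_norm_lt_one hlt

/-- The logarithm `∑ j, z ^ j / j * (u ^ j / (1 - u ^ j))` of `∏ i, 1 / (1 - z * u ^ (i + 1))`, the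
generating function of the partition polynomials at `z`. The term `j = 0` vanishes. -/
noncomputable def logGenFun (z u : ℂ) : ℂ :=
  ∑' j : ℕ, z ^ j / (j : ℂ) * (u ^ j / (1 - u ^ j))

theorem norm_pow_div_natCast_le (z : ℂ) (j : ℕ) : ‖z ^ j / (j : ℂ)‖ ≤ ‖z‖ ^ j := by
  rcases Nat.eq_zero_or_pos j with rfl | hj
  · simp
  · rw [norm_div, norm_pow, Complex.norm_natCast]
    exact div_le_self (by positivity) (by exact_mod_cast hj)

theorem norm_mul_pow_pow_div_le (z : ℂ) {u : ℂ} (hu : ‖u‖ ≤ 1) (i j : ℕ) :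
    ‖(z * u ^ (i + 1)) ^ j / (j : ℂ)‖ ≤ ‖u‖ ^ i * ‖z‖ ^ j := by
  rcases Nat.eq_zero_or_pos j with rfl | hj
  · simp
  · rw [mul_pow, ← pow_mul, mul_div_right_comm, norm_mul, norm_pow u, mul_comm]
    exact mul_le_mul (pow_le_pow_of_le_one (norm_nonneg u) hu (by nlinarith))
      (norm_pow_div_natCast_le z j) (norm_nonneg _) (by positivity)

theorem hasSum_mul_pow_pow_div (z : ℂ) {u : ℂ} (hu : ‖u‖ < 1) (j : ℕ) :
    HasSum (fun i ↦ (z * u ^ (i + 1)) ^ j / (j : ℂ)) (z ^ j / (j : ℂ) * (u ^ j / (1 - u ^ j))) := by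
  rcases eq_or_ne j 0 with rfl | hj
  · simp
  have hgeom := hasSum_geometric_of_norm_lt_one (ξ := u ^ j)
    (by rw [norm_pow]; exact pow_lt_one₀ (norm_nonneg u) hu hj)
  rw [div_eq_mul_inv (u ^ j)]
  refine ((hgeom.mul_left (u ^ j)).mul_left (z ^ j / (j : ℂ))).congr_fun fun i ↦ ?_
  rw [mul_pow, ← pow_mul, ← pow_mul, add_one_mul, mul_comm i j, pow_add]
  ring

theorem summable_mul_pow_pow_div {z u : ℂ} (hz : ‖z‖ < 1) (hu : ‖u‖ < 1) :
    Summable fun p : ℕ × ℕ ↦ (z * u ^ (p.1 + 1)) ^ p.2 / (p.2 : ℂ) := by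
  have hgeom := (summable_geometric_of_lt_one (norm_nonneg u) hu).mul_of_nonneg
    (summable_geometric_of_lt_one (norm_nonneg z) hz) (fun _ ↦ pow_nonneg (norm_nonneg u) _)
    fun _ ↦ pow_nonneg (norm_nonneg z) _
  exact .of_norm_bounded hgeom fun p ↦ norm_mul_pow_pow_div_le z hu.le p.1 p.2

theorem hasSum_neg_log_one_sub_mul_pow {z u : ℂ} (hz : ‖z‖ < 1) (hu : ‖u‖ < 1) :
    HasSum (fun i : ℕ ↦ -log (1 - z * u ^ (i + 1))) (logGenFun z u) := by
  have hsum := (summable_mul_pow_pow_div hz hu).hasSum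
  have hswap := ((Equiv.prodComm ℕ ℕ).hasSum_iff.2 hsum).prod_fiberwise
    (hasSum_mul_pow_pow_div z hu)
  rw [logGenFun, hswap.tsum_eq]
  have hlog (i : ℕ) := hasSum_taylorSeries_neg_log (norm_mul_pow_lt_one hz hu.le (i + 1))
  exact hsum.prod_fiberwise hlog

theorem tendsto_prod_inv_one_sub_mul_pow {z u : ℂ} (hz : ‖z‖ < 1) (hu : ‖u‖ < 1) :
    Tendsto (fun N ↦ ∏ i ∈ range N, (1 - z * u ^ (i + 1))⁻¹) atTop
      (𝓝 (exp (logGenFun z u))) := by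
  refine ((continuous_exp.tendsto _).comp
    (hasSum_neg_log_one_sub_mul_pow hz hu).tendsto_sum_nat).congr fun N ↦ ?_
  rw [Function.comp_apply, exp_sum]
  refine Finset.prod_congr rfl fun i _ ↦ ?_
  rw [exp_neg, exp_log (one_sub_ne_zero_of_norm_lt_one (norm_mul_pow_lt_one hz hu.le _))]

theorem exists_norm_prod_inv_one_sub_mul_pow_le {z : ℂ} (hz : ‖z‖ < 1) {ρ : ℝ} (hρ : ρ < 1) :
    ∃ C, ∀ (u : ℂ) (N : ℕ), ‖u‖ = ρ → ‖∏ i ∈ range N, (1 - z * u ^ (i + 1))⁻¹‖ ≤ C := by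
  rcases lt_or_ge ρ 0 with hρ₀ | hρ₀
  · exact ⟨0, fun u _ hu ↦ absurd (hu ▸ norm_nonneg u) hρ₀.not_ge⟩
  obtain ⟨C, hC⟩ := (tendsto_prod_inv_one_sub_mul_pow (z := (‖z‖ : ℝ)) (u := ρ) (by simpa)
    (by simpa [abs_of_nonneg hρ₀])).norm.bddAbove_range
  refine ⟨C, fun u N hu ↦ le_trans ?_ (hC ⟨N, rfl⟩)⟩
  simp only [norm_prod]
  refine Finset.prod_le_prod (fun _ _ ↦ norm_nonneg _) fun i _ ↦ ?_
  have hlt := norm_mul_pow_lt_one hz (hu.trans_le hρ.le) (i + 1)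
  rw [norm_mul, norm_pow, hu] at hlt
  have hnorm : ‖1 - (‖z‖ : ℂ) * (ρ : ℂ) ^ (i + 1)‖ = 1 - ‖z‖ * ρ ^ (i + 1) := by
    rw [← Real.norm_of_nonneg (sub_nonneg.2 hlt.le), ← norm_real]
    push_cast
    rfl
  rw [norm_inv, norm_inv, hnorm]
  refine inv_anti₀ (sub_pos.2 hlt) ?_
  simpa only [norm_one, norm_mul, norm_pow, hu] using norm_sub_norm_le 1 (z * u ^ (i + 1))

theorem norm_exp_neg_add_mul_I (σ y : ℝ) : ‖exp (-(σ + y * I))‖ = Real.exp (-σ) := by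
  simp [norm_exp]

theorem norm_exp_neg_add_mul_I_lt_one {σ : ℝ} (hσ : 0 < σ) (y : ℝ) : ‖exp (-(σ + y * I))‖ < 1 := by
  rwa [norm_exp_neg_add_mul_I, Real.exp_lt_one_iff, neg_lt_zero]

theorem norm_exp_natCast_mul_add_mul_I (n : ℕ) (σ y : ℝ) :
    ‖exp (n * (σ + y * I))‖ = Real.exp (n * σ) := by
  simp [norm_exp]

theorem integral_exp_intCast_mul_I_mul {k : ℤ} (hk : k ≠ 0) (b : ℝ) :
    ∫ y in b..b + 2 * Real.pi, exp (k * I * y) = 0 := by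
  have hperiod : (k : ℂ) * I * (b + 2 * Real.pi : ℝ) = k * I * b + k * (2 * Real.pi * I) := by
    push_cast
    ring
  rw [integral_exp_mul_complex (by simpa using hk), hperiod, exp_add,
    exp_int_mul_two_pi_mul_I, mul_one, sub_self, zero_div]

theorem integral_coeff_mul_exp (c : ℂ) (σ b : ℝ) (m n : ℕ) :
    ∫ y in b..b + 2 * Real.pi, c * exp (-(σ + y * I)) ^ m * exp (n * (σ + y * I)) =
      if m = n then 2 * Real.pi * c else 0 := by
  have hexp (y : ℝ) : c * exp (-(σ + y * I)) ^ m * exp (n * (σ + y * I)) =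
      c * exp ((n - m) * σ) * exp (((n - m : ℤ) : ℂ) * I * y) := by
    rw [← exp_nat_mul, mul_assoc, mul_assoc, ← exp_add, ← exp_add]
    push_cast
    ring_nf
  simp only [hexp]
  rw [intervalIntegral.integral_const_mul]
  split_ifs with hmn
  · simp [hmn, mul_comm]
  · rw [integral_exp_intCast_mul_I_mul (by lia), mul_zero]

theorem HasAbsEval.integral_mul_exp {φ : PowerSeries ℂ} {g : ℝ → ℂ} {σ : ℝ}
    (h : ∀ y : ℝ, HasAbsEval φ (exp (-(σ + y * I))) (g y)) (n : ℕ) (b : ℝ) :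
    ∫ y in b..b + 2 * Real.pi, g y * exp (n * (σ + y * I)) = 2 * Real.pi * φ.coeff n := by
  have hbound : Summable fun m ↦ ‖φ.coeff m‖ * Real.exp (-σ) ^ m * Real.exp (n * σ) := by
    simpa only [norm_mul, norm_pow, norm_exp_neg_add_mul_I] using (h 0).1.mul_right _
  have hsum := intervalIntegral.hasSum_integral_of_dominated_convergence
    (μ := MeasureTheory.volume) (a := b) (b := b + 2 * Real.pi)
    (F := fun m y ↦ φ.coeff m * exp (-(σ + y * I)) ^ m * exp (n * (σ + y * I)))
    (fun m _ ↦ ‖φ.coeff m‖ * Real.exp (-σ) ^ m * Real.exp (n * σ))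
    (fun m ↦ Continuous.aestronglyMeasurable (by fun_prop))
    (fun m ↦ .of_forall fun y _ ↦ by
      rw [norm_mul, norm_mul, norm_pow, norm_exp_neg_add_mul_I, norm_exp_natCast_mul_add_mul_I])
    (.of_forall fun _ _ ↦ hbound) (by simp) (.of_forall fun y _ ↦ (h y).2.mul_right _)
  simp only [integral_coeff_mul_exp] at hsum
  exact hsum.unique ((hasSum_ite_eq n (2 * Real.pi * φ.coeff n)).congr_fun fun m ↦ by grind)

theorem integral_exp_logGenFun {z : ℂ} (hz : ‖z‖ < 1) {n : ℕ} (hn : n ≠ 0) {σ : ℝ} (hσ : 0 < σ)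
    (b : ℝ) :
    ∫ y in b..b + 2 * Real.pi, exp (logGenFun z (exp (-(σ + y * I)))) * exp (n * (σ + y * I)) =
      2 * Real.pi * F n z := by
  have hu (y : ℝ) := norm_exp_neg_add_mul_I_lt_one hσ y
  have hF := (tendsto_coeff_prod_partFactor z n).const_mul (2 * Real.pi : ℂ)
  simp only [sum_pow_card_parts z hn, ← HasAbsEval.integral_mul_exp (fun y ↦ HasAbsEval.prod
    fun i _ ↦ hasAbsEval_partFactor hz (hu y).le i) n b] at hF
  obtain ⟨C, hC⟩ := exists_norm_prod_inv_one_sub_mul_pow_le hz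
    (Real.exp_lt_one_iff.2 (neg_lt_zero.2 hσ))
  refine tendsto_nhds_unique (intervalIntegral.tendsto_integral_filter_of_dominated_convergence
    (fun _ ↦ C * Real.exp (n * σ)) (.of_forall fun N ↦ Continuous.aestronglyMeasurable ?_)
    (.of_forall fun N ↦ .of_forall fun y _ ↦ ?_) (by simp)
    (.of_forall fun y _ ↦ (tendsto_prod_inv_one_sub_mul_pow hz (hu y)).mul_const _)) hF
  · exact (continuous_finsetProd _ fun i _ ↦ Continuous.inv₀ (by fun_prop) fun y ↦
      one_sub_ne_zero_of_norm_lt_one (norm_mul_pow_lt_one hz (hu y).le _)).mul (by fun_prop)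
  · rw [norm_mul, norm_exp_natCast_mul_add_mul_I]
    exact mul_le_mul_of_nonneg_right (hC _ N (norm_exp_neg_add_mul_I σ y)) (Real.exp_nonneg _)

/-! ### Expansion of the generating function near a root of unity -/

/-- The closed sector `|Im w| ≤ C * Re w` of the right half-plane, with its vertex `0`. -/
def sector (C : ℝ) : Set ℂ := {w | 0 ≤ w.re ∧ |w.im| ≤ C * w.re}

theorem norm_le_of_mem_sector {C : ℝ} {s : ℂ} (hs : s ∈ sector C) : ‖s‖ ≤ (1 + C) * s.re := by
  have h := norm_le_abs_re_add_abs_im s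
  rw [abs_of_nonneg hs.1] at h
  linarith [hs.2]

theorem ofReal_mul_mem_sector {C r : ℝ} (hr : 0 ≤ r) {s : ℂ} (hs : s ∈ sector C) :
    (r : ℂ) * s ∈ sector C := by
  refine ⟨by simpa using mul_nonneg hr hs.1, ?_⟩
  simpa [abs_mul, abs_of_nonneg hr, mul_left_comm] using mul_le_mul_of_nonneg_left hs.2 hr

theorem re_le_norm_exp_sub {η : ℂ} (hη : ‖η‖ = 1) (s : ℂ) : s.re ≤ ‖exp s - η‖ := by
  have h := norm_sub_norm_le (exp s) η
  rw [norm_exp, hη] at h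
  linarith [Real.add_one_le_exp s.re]

theorem mul_exp_neg_div_one_sub (η s : ℂ) :
    η * exp (-s) / (1 - η * exp (-s)) = η / (exp s - η) := by
  have h : 1 - η * exp (-s) = (exp s - η) * exp (-s) := by
    rw [sub_mul, ← exp_add, add_neg_cancel, exp_zero]
  rw [h, mul_div_mul_right _ _ (exp_ne_zero _)]

open Classical in
/-- The function `s ↦ η / (exp s - η)` freed of its pole at `s = 0`, which is `1 / s` for `η = 1`
and absent otherwise. The value at `s = 0` is the one that makes it continuous there. -/
noncomputable def regKernel (η s : ℂ) : ℂ :=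
  if η = 1 then if s = 0 then -1 / 2 else 1 / (exp s - 1) - 1 / s else η / (exp s - η)

theorem one_div_exp_sub_one_sub {s : ℂ} (hs : exp s - 1 ≠ 0) :
    1 / (exp s - 1) - 1 / s = -(exp s - 1 - s) / (s * (exp s - 1)) := by
  have hs₀ : s ≠ 0 := fun h ↦ hs (by simp [h])
  field_simp
  ring

theorem norm_regKernel_one_le {C : ℝ} (hC : 0 ≤ C) {s : ℂ} (hs : s ∈ sector C) :
    ‖regKernel 1 s‖ ≤ 2 + C := by
  rw [regKernel, if_pos rfl]
  split_ifs with hs₀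
  · norm_num
    linarith
  have hnorm : 0 < ‖s‖ := norm_pos_iff.2 hs₀
  have hle : ‖s‖ ≤ (1 + C) * ‖exp s - 1‖ := (norm_le_of_mem_sector hs).trans
    (mul_le_mul_of_nonneg_left (re_le_norm_exp_sub norm_one s) (by linarith))
  have hpos : 0 < ‖exp s - 1‖ := pos_of_mul_pos_right (hnorm.trans_le hle) (by linarith)
  rcases le_total ‖s‖ 1 with h | h
  · rw [one_div_exp_sub_one_sub (norm_pos_iff.1 hpos), norm_div, norm_neg, norm_mul,
      div_le_iff₀ (by positivity)]
    have hsq : ‖s‖ * ‖s‖ ≤ ‖s‖ * ((1 + C) * ‖exp s - 1‖) := mul_le_mul_of_nonneg_left hle hnorm.le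
    nlinarith [norm_exp_sub_one_sub_id_le h, mul_pos hnorm hpos]
  · have hexp : ‖1 / (exp s - 1)‖ ≤ 1 + C := by
      rw [norm_div, norm_one, div_le_iff₀ hpos]
      exact h.trans hle
    have hs₁ : ‖1 / s‖ ≤ 1 := by
      rw [norm_div, norm_one]
      exact div_le_one_of_le₀ h hnorm.le
    linarith [norm_sub_le (1 / (exp s - 1)) (1 / s)]

theorem norm_regKernel_le_of_ne_one {C : ℝ} (hC : 0 ≤ C) {η s : ℂ} (hη : ‖η‖ = 1) (hη₁ : η ≠ 1)
    (hs : s ∈ sector C) : ‖regKernel η s‖ ≤ 4 * (1 + C) / ‖1 - η‖ := by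
  have hpos : 0 < ‖1 - η‖ := norm_pos_iff.2 (sub_ne_zero.2 hη₁.symm)
  have hle_two : ‖1 - η‖ ≤ 2 := (norm_sub_le _ _).trans (by norm_num [hη])
  have hle : ‖1 - η‖ ≤ 4 * (1 + C) * ‖exp s - η‖ := by
    rcases le_total ‖s‖ (‖1 - η‖ / 4) with h | h
    · have hexp := norm_exp_sub_one_le (x := s) (by linarith)
      have htriangle := norm_sub_le (exp s - η) (exp s - 1)
      rw [sub_sub_sub_cancel_left] at htriangle
      nlinarith [norm_nonneg (exp s - η)]
    · nlinarith [norm_le_of_mem_sector hs, re_le_norm_exp_sub hη s]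
  have hpos' : 0 < ‖exp s - η‖ := pos_of_mul_pos_right (hpos.trans_le hle) (by positivity)
  rwa [regKernel, if_neg hη₁, norm_div, hη, div_le_div_iff₀ hpos' hpos, one_mul]

theorem exists_norm_regKernel_le {m : ℕ} (hm : m ≠ 0) {C : ℝ} (hC : 0 ≤ C) :
    ∃ K, ∀ η : ℂ, η ^ m = 1 → ∀ s ∈ sector C, ‖regKernel η s‖ ≤ K := by
  obtain ⟨K, hK⟩ := ((Polynomial.nthRootsFinset m (1 : ℂ)).image
    fun η ↦ 2 + C + 4 * (1 + C) / ‖1 - η‖).exists_le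
  refine ⟨K, fun η hη s hs ↦ le_trans ?_ (hK _ (Finset.mem_image_of_mem _
    ((Polynomial.mem_nthRootsFinset (Nat.pos_of_ne_zero hm) 1).2 hη)))⟩
  rcases eq_or_ne η 1 with rfl | hη₁
  · simpa using norm_regKernel_one_le hC hs
  · linarith [norm_regKernel_le_of_ne_one hC (norm_eq_one_of_pow_eq_one hη hm) hη₁ hs]

theorem tendsto_exp_sub_one_div : Tendsto (fun s : ℂ ↦ (exp s - 1) / s) (𝓝[≠] 0) (𝓝 1) := by
  simpa [slope_fun_def_field] using (hasDerivAt_exp 0).tendsto_slope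

theorem tendsto_exp_sub_one_sub_div_sq :
    Tendsto (fun s : ℂ ↦ (exp s - 1 - s) / s ^ 2) (𝓝[≠] 0) (𝓝 (1 / 2)) := by
  have hnorm : Tendsto (fun s : ℂ ↦ ‖s‖) (𝓝[≠] 0) (𝓝 0) := tendsto_norm_zero.mono_left inf_le_left
  rw [tendsto_iff_norm_sub_tendsto_zero]
  refine squeeze_zero' (.of_forall fun _ ↦ norm_nonneg _) ?_ hnorm
  filter_upwards [hnorm.eventually (gt_mem_nhds one_pos), self_mem_nhdsWithin] with s hs hs₀
  have hs₀' : s ≠ 0 := hs₀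
  have htaylor : (exp s - 1 - s) / s ^ 2 - 1 / 2 =
      (exp s - ∑ m ∈ range 3, s ^ m / (m.factorial : ℂ)) / s ^ 2 := by
    simp only [Finset.sum_range_succ, Finset.sum_range_zero, Nat.factorial]
    push_cast
    field_simp
    ring
  have hbound := exp_bound hs.le (n := 3) (by norm_num)
  rw [htaylor, norm_div, norm_pow, div_le_iff₀ (by positivity)]
  norm_num [Nat.factorial] at hbound
  nlinarith [pow_nonneg (norm_nonneg s) 3]

theorem continuousAt_regKernel_zero (η : ℂ) : ContinuousAt (regKernel η) 0 := by
  by_cases hη : η = 1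
  · subst hη
    rw [continuousAt_iff_punctured_nhds]
    have h := (tendsto_exp_sub_one_sub_div_sq.div tendsto_exp_sub_one_div one_ne_zero).neg
    convert h.congr' ?_ using 2
    · norm_num [regKernel]
    filter_upwards [tendsto_exp_sub_one_div.eventually_ne one_ne_zero, self_mem_nhdsWithin]
      with s hs hs₀
    have hs₀' : s ≠ 0 := hs₀
    have hexp : exp s - 1 ≠ 0 := fun h ↦ hs (by rw [h, zero_div])
    rw [regKernel, if_pos rfl, if_neg hs₀', one_div_exp_sub_one_sub hexp, Pi.div_apply]
    field_simp
  · have heq : regKernel η = fun s ↦ η / (exp s - η) := by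
      ext s
      rw [regKernel, if_neg hη]
    rw [heq]
    refine continuousAt_const.div (by fun_prop) ?_
    rw [exp_zero]
    exact sub_ne_zero.2 (Ne.symm hη)

/-- The part of `logGenFun z (ζ * exp (-w))`, for a root of unity `ζ`, that stays bounded as `w`
tends to `0` in a sector. -/
noncomputable def regLogGenFun (z ζ w : ℂ) : ℂ :=
  ∑' j : ℕ, z ^ j / (j : ℂ) * regKernel (ζ ^ j) (j * w)

theorem exists_norm_term_regLogGenFun_le {m : ℕ} (hm : m ≠ 0) {C : ℝ} (hC : 0 ≤ C) (z : ℂ) :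
    ∃ K, ∀ ζ : ℂ, ζ ^ m = 1 → ∀ w ∈ sector C, ∀ j : ℕ,
      ‖z ^ j / (j : ℂ) * regKernel (ζ ^ j) (j * w)‖ ≤ ‖z‖ ^ j * K := by
  obtain ⟨K, hK⟩ := exists_norm_regKernel_le hm hC
  refine ⟨K, fun ζ hζ w hw j ↦ ?_⟩
  rw [norm_mul]
  have hjw : (j : ℂ) * w ∈ sector C := by simpa using ofReal_mul_mem_sector j.cast_nonneg hw
  refine mul_le_mul (norm_pow_div_natCast_le z j) (hK _ ?_ _ hjw) (norm_nonneg _) (by positivity)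
  rw [← pow_mul, mul_comm, pow_mul, hζ, one_pow]

theorem summable_norm_pow_mul {z : ℂ} (hz : ‖z‖ < 1) (K : ℝ) : Summable fun j ↦ ‖z‖ ^ j * K :=
  (summable_geometric_of_lt_one (norm_nonneg z) hz).mul_right K

theorem hasSum_regLogGenFun {z ζ w : ℂ} (hz : ‖z‖ < 1) {m : ℕ} (hm : m ≠ 0) (hζ : ζ ^ m = 1)
    {C : ℝ} (hC : 0 ≤ C) (hw : w ∈ sector C) :
    HasSum (fun j : ℕ ↦ z ^ j / (j : ℂ) * regKernel (ζ ^ j) (j * w)) (regLogGenFun z ζ w) := by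
  obtain ⟨K, hK⟩ := exists_norm_term_regLogGenFun_le hm hC z
  exact (Summable.of_norm_bounded (summable_norm_pow_mul hz K) (hK ζ hζ w hw)).hasSum

theorem exists_norm_regLogGenFun_le {z : ℂ} (hz : ‖z‖ < 1) {m : ℕ} (hm : m ≠ 0) {C : ℝ}
    (hC : 0 ≤ C) : ∃ K, ∀ ζ : ℂ, ζ ^ m = 1 → ∀ w ∈ sector C, ‖regLogGenFun z ζ w‖ ≤ K := by
  obtain ⟨K, hK⟩ := exists_norm_term_regLogGenFun_le hm hC z
  exact ⟨∑' j, ‖z‖ ^ j * K, fun ζ hζ w hw ↦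
    tsum_of_norm_bounded (summable_norm_pow_mul hz K).hasSum (hK ζ hζ w hw)⟩

theorem continuousWithinAt_regLogGenFun_zero {z ζ : ℂ} (hz : ‖z‖ < 1) {m : ℕ} (hm : m ≠ 0)
    (hζ : ζ ^ m = 1) {C : ℝ} (hC : 0 ≤ C) :
    ContinuousWithinAt (regLogGenFun z ζ) (sector C) 0 := by
  obtain ⟨K, hK⟩ := exists_norm_term_regLogGenFun_le hm hC z
  refine tendsto_tsum_of_dominated_convergence (summable_norm_pow_mul hz K) (fun j ↦ ?_) ?_
  · have hmul : ContinuousAt (fun w : ℂ ↦ regKernel (ζ ^ j) (j * w)) 0 :=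
      ContinuousAt.comp_of_eq (continuousAt_regKernel_zero _) (by fun_prop) (mul_zero _)
    exact (continuousAt_const.mul hmul).continuousWithinAt
  · filter_upwards [self_mem_nhdsWithin] with w hw using hK ζ hζ w hw

theorem hasSum_ite_dvd_dilog {z : ℂ} (hz : ‖z‖ ≤ 1) {k : ℕ} (hk : k ≠ 0) :
    HasSum (fun j : ℕ ↦ if k ∣ j then z ^ j / (j : ℂ) ^ 2 else 0)
      (dilog (z ^ k) / (k : ℂ) ^ 2) := by
  have hinj : Function.Injective fun n : ℕ ↦ k * (n + 1) :=
    (mul_right_injective₀ hk).comp (add_left_injective 1)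
  rw [← hinj.hasSum_iff]
  · have h := hasSum_dilog (x := z ^ k) (by rw [norm_pow]; exact pow_le_one₀ (norm_nonneg z) hz)
    refine (h.div_const _).congr_fun fun n ↦ ?_
    rw [Function.comp_apply, if_pos (Dvd.intro _ rfl), pow_mul, div_div]
    push_cast
    ring
  · intro j hj
    split_ifs with hdvd
    · obtain ⟨_ | q, rfl⟩ := hdvd
      · simp
      · exact absurd ⟨q, rfl⟩ hj
    · rfl

theorem logGenFun_mul_exp_neg {z ζ w : ℂ} {k : ℕ} (hz : ‖z‖ < 1) (hk : k ≠ 0)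
    (hζ : IsPrimitiveRoot ζ k) (hw : 0 < w.re) :
    logGenFun z (ζ * exp (-w)) = dilog (z ^ k) / ((k : ℂ) ^ 2 * w) + regLogGenFun z ζ w := by
  have hw₀ : w ≠ 0 := fun h ↦ hw.ne' (by rw [h, zero_re])
  have hsector : w ∈ sector (|w.im| / w.re) := ⟨hw.le, (div_mul_cancel₀ _ hw.ne').ge⟩
  have hreg := hasSum_regLogGenFun hz hk hζ.pow_eq_one (by positivity) hsector
  have hsum := ((hasSum_ite_dvd_dilog hz.le hk).div_const w).add hreg
  rw [div_div] at hsum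
  refine (hsum.congr_fun fun j ↦ ?_).tsum_eq
  rcases eq_or_ne j 0 with rfl | hj
  · simp
  have hjw : (j : ℂ) * w ≠ 0 := mul_ne_zero (Nat.cast_ne_zero.2 hj) hw₀
  rw [mul_pow, ← exp_nat_mul, mul_neg, mul_exp_neg_div_one_sub, regKernel, if_neg hjw]
  by_cases hdvd : k ∣ j
  · rw [if_pos hdvd, (hζ.pow_eq_one_iff_dvd j).2 hdvd, if_pos rfl]
    have hj' : (j : ℂ) ≠ 0 := Nat.cast_ne_zero.2 hj
    field_simp
    ring
  · rw [if_neg hdvd, if_neg ((hζ.pow_eq_one_iff_dvd j).not.2 hdvd), zero_div, zero_add]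

/-! ### Upper bounds for the generating function near the unit circle -/

theorem re_sq_div_le (s : ℂ) {w : ℂ} (hw : 0 < w.re) : (s ^ 2 / w).re ≤ s.re ^ 2 / w.re := by
  have hnormSq : 0 < normSq w := normSq_pos.2 fun h ↦ hw.ne' (by rw [h, zero_re])
  rw [div_re, ← add_div, div_le_div_iff₀ hnormSq hw, normSq_apply, sq, mul_re, mul_im]
  linarith [sq_nonneg (s.re * w.im - s.im * w.re)]

theorem two_div_pi_mul_abs_le_norm_exp_sub_one {s β : ℝ} (hs : 0 ≤ s) (hβ : |β| ≤ Real.pi) :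
    2 / Real.pi * |β| ≤ ‖exp (s + β * I) - 1‖ := by
  refine le_of_sq_le_sq ?_ (norm_nonneg _)
  have hsq : ‖exp (s + β * I) - 1‖ ^ 2 =
      (Real.exp s - 1) ^ 2 + 2 * Real.exp s * (1 - Real.cos β) := by
    rw [← normSq_eq_norm_sq, normSq_apply, sub_re, sub_im, exp_re, exp_im]
    simp only [add_re, ofReal_re, mul_re, I_re, mul_zero, ofReal_im, I_im, add_im, mul_im, one_re,
      one_im]
    norm_num
    linear_combination Real.exp s ^ 2 * Real.sin_sq_add_cos_sq β
  have hcos : 2 / Real.pi ^ 2 * β ^ 2 ≤ 1 - Real.cos β := by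
    linarith [Real.cos_le_one_sub_mul_cos_sq hβ]
  calc (2 / Real.pi * |β|) ^ 2 = 2 * (2 / Real.pi ^ 2 * β ^ 2) := by
        rw [mul_pow, sq_abs]; ring
    _ ≤ 2 * (1 - Real.cos β) := by gcongr
    _ ≤ 2 * Real.exp s * (1 - Real.cos β) := by
        nlinarith [Real.one_le_exp hs, Real.cos_le_one β]
    _ ≤ ‖exp (s + β * I) - 1‖ ^ 2 := by
        rw [hsq]; exact le_add_of_nonneg_left (sq_nonneg _)

theorem norm_exp_pow_div_one_sub (w : ℂ) (j : ℕ) :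
    ‖exp (-w) ^ j / (1 - exp (-w) ^ j)‖ = 1 / ‖exp (j * w) - 1‖ := by
  have h := mul_exp_neg_div_one_sub 1 (j * w)
  rw [one_mul] at h
  rw [← exp_nat_mul, mul_neg, h, norm_div, norm_one]

theorem norm_exp_pow_div_one_sub_le {w : ℂ} (hw : 0 < w.re) {j : ℕ} (hj : j ≠ 0) :
    ‖exp (-w) ^ j / (1 - exp (-w) ^ j)‖ ≤ 1 / w.re := by
  have hre : j * w.re ≤ ‖exp (j * w) - 1‖ := by
    simpa using re_le_norm_exp_sub norm_one (j * w)
  rw [norm_exp_pow_div_one_sub]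
  exact one_div_le_one_div_of_le hw ((le_mul_of_one_le_left hw.le
    (Nat.one_le_cast.2 (Nat.one_le_iff_ne_zero.2 hj))).trans hre)

theorem norm_exp_pow_div_one_sub_le_of_forall_lt {w : ℂ} (hw : 0 ≤ w.re) {d : ℝ} (hd : 0 < d)
    {j : ℕ} (h : ∀ m : ℤ, d < |j * w.im - 2 * Real.pi * m|) :
    ‖exp (-w) ^ j / (1 - exp (-w) ^ j)‖ ≤ 2 / d := by
  have hpi := Real.pi_pos
  let m : ℤ := round (j * w.im / (2 * Real.pi))
  have hβ : |j * w.im - 2 * Real.pi * m| ≤ Real.pi := by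
    have hround := abs_sub_round (j * w.im / (2 * Real.pi))
    have heq : j * w.im - 2 * Real.pi * m = 2 * Real.pi * (j * w.im / (2 * Real.pi) - m) := by
      field_simp
    rw [heq, abs_mul, abs_of_pos (by positivity)]
    nlinarith
  have hexp : exp (j * w) = exp ((j * w.re : ℝ) + (j * w.im - 2 * Real.pi * m : ℝ) * I) := by
    rw [exp_eq_exp_iff_exists_int]
    refine ⟨m, ?_⟩
    nth_rw 1 [← re_add_im w]
    push_cast
    ring
  have hnorm : 2 / Real.pi * d ≤ ‖exp (j * w) - 1‖ := by
    rw [hexp]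
    exact (mul_le_mul_of_nonneg_left (h m).le (by positivity)).trans
      (two_div_pi_mul_abs_le_norm_exp_sub_one (by positivity) hβ)
  rw [norm_exp_pow_div_one_sub]
  calc 1 / ‖exp (j * w) - 1‖ ≤ 1 / (2 / Real.pi * d) :=
        one_div_le_one_div_of_le (by positivity) hnorm
    _ = Real.pi / (2 * d) := by field_simp
    _ ≤ 4 / (2 * d) := by gcongr; exact Real.pi_le_four
    _ = 2 / d := by field_simp; norm_num

theorem norm_term_logGenFun_le {B : ℝ} (hB : 0 ≤ B) (z : ℂ) {u : ℂ} {j : ℕ}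
    (h : j ≠ 0 → ‖u ^ j / (1 - u ^ j)‖ ≤ B) :
    ‖z ^ j / (j : ℂ) * (u ^ j / (1 - u ^ j))‖ ≤ ‖z‖ ^ j * B := by
  rcases eq_or_ne j 0 with rfl | hj
  · simpa using hB
  · rw [norm_mul]
    exact mul_le_mul (norm_pow_div_natCast_le z j) (h hj) (norm_nonneg _) (by positivity)

theorem continuousOn_logGenFun {z : ℂ} (hz : ‖z‖ < 1) {ρ : ℝ} (hρ : ρ < 1) :
    ContinuousOn (logGenFun z) (Metric.ball 0 ρ) := by
  have hpow (j : ℕ) (hj : j ≠ 0) (u : ℂ) (hu : u ∈ Metric.ball 0 ρ) : ‖u ^ j‖ ≤ ρ := by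
    have hu' := (mem_ball_zero_iff.1 hu).le
    rw [norm_pow]
    exact (pow_le_of_le_one (norm_nonneg _) (hu'.trans hρ.le) hj).trans hu'
  have hden (j : ℕ) (hj : j ≠ 0) (u : ℂ) (hu : u ∈ Metric.ball 0 ρ) : 1 - ρ ≤ ‖1 - u ^ j‖ := by
    have h := norm_sub_norm_le (1 : ℂ) (u ^ j)
    rw [norm_one] at h
    linarith [hpow j hj u hu]
  refine continuousOn_tsum (u := fun j ↦ ‖z‖ ^ j * (1 / (1 - ρ))) (fun j ↦ ?_)
    (summable_norm_pow_mul hz _) fun j u hu ↦ ?_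
  · rcases eq_or_ne j 0 with rfl | hj
    · simpa using continuousOn_const
    · exact continuousOn_const.mul ((continuousOn_pow j).div (by fun_prop) fun u hu ↦
        norm_pos_iff.1 ((sub_pos.2 hρ).trans_le (hden j hj u hu)))
  · refine norm_term_logGenFun_le (one_div_nonneg.2 (sub_pos.2 hρ).le) z fun hj ↦ ?_
    rw [norm_div]
    exact div_le_div₀ zero_le_one ((hpow j hj u hu).trans hρ.le) (sub_pos.2 hρ) (hden j hj u hu)

theorem continuousAt_logGenFun {z u : ℂ} (hz : ‖z‖ < 1) (hu : ‖u‖ < 1) :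
    ContinuousAt (logGenFun z) u := by
  obtain ⟨ρ, huρ, hρ⟩ := exists_between hu
  exact (continuousOn_logGenFun hz hρ).continuousAt
    (Metric.isOpen_ball.mem_nhds (mem_ball_zero_iff.2 huρ))

theorem exists_norm_logGenFun_le_of_forall_lt {z : ℂ} (hz : ‖z‖ < 1) {ε : ℝ} (hε : 0 < ε) :
    ∃ J : ℕ, ∃ C > 0, ∀ w : ℂ, 0 < w.re →
      (∀ j ≠ 0, j < J → ∀ m : ℤ, C * w.re < |j * w.im - 2 * Real.pi * m|) →
      ‖logGenFun z (exp (-w))‖ ≤ ε / w.re := by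
  have hgeo := summable_geometric_of_lt_one (norm_nonneg z) hz
  obtain ⟨J, hJ⟩ : ∃ J : ℕ, ∑' j : ℕ, ‖z‖ ^ (j + J) < ε / 2 :=
    ((tendsto_sum_nat_add fun j ↦ ‖z‖ ^ j).eventually (gt_mem_nhds (half_pos hε))).exists
  set M := ∑' j : ℕ, ‖z‖ ^ j
  have hM₀ : 0 ≤ M := tsum_nonneg fun j ↦ by positivity
  refine ⟨J, 4 * (M + 1) / ε, by positivity, fun w hw hfar ↦ ?_⟩
  set t : ℕ → ℂ := fun j ↦ z ^ j / (j : ℂ) * (exp (-w) ^ j / (1 - exp (-w) ^ j))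
  have ht (j : ℕ) : ‖t j‖ ≤ ‖z‖ ^ j * (1 / w.re) :=
    norm_term_logGenFun_le (by positivity) z (norm_exp_pow_div_one_sub_le hw)
  have hhead : ‖∑ j ∈ range J, t j‖ ≤ ε / 2 / w.re := calc
    ‖∑ j ∈ range J, t j‖ ≤ ∑ j ∈ range J, ‖z‖ ^ j * (2 / (4 * (M + 1) / ε * w.re)) :=
        norm_sum_le_of_le _ fun j hj ↦ norm_term_logGenFun_le (by positivity) z fun hj₀ ↦
          norm_exp_pow_div_one_sub_le_of_forall_lt hw.le (by positivity)
            (hfar j hj₀ (Finset.mem_range.1 hj))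
    _ ≤ (M + 1) * (2 / (4 * (M + 1) / ε * w.re)) := by
        rw [← Finset.sum_mul]
        gcongr
        linarith [hgeo.sum_le_tsum (range J) fun _ _ ↦ by positivity]
    _ = ε / 2 / w.re := by field_simp; norm_num
  have htail : ‖∑' j, t (j + J)‖ ≤ ε / 2 / w.re := calc
    ‖∑' j, t (j + J)‖ ≤ (∑' j : ℕ, ‖z‖ ^ (j + J)) * (1 / w.re) :=
        tsum_of_norm_bounded (((summable_nat_add_iff J).2 hgeo).hasSum.mul_right _)
          fun j ↦ ht (j + J)
    _ ≤ ε / 2 / w.re := by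
        rw [mul_one_div]
        gcongr
  have hsplit : logGenFun z (exp (-w)) = ∑ j ∈ range J, t j + ∑' j, t (j + J) :=
    ((Summable.of_norm_bounded (summable_norm_pow_mul hz _) ht).sum_add_tsum_nat_add J).symm
  rw [hsplit, ← add_halves ε, add_div]
  exact norm_add_le_of_le hhead htail

theorem logGenFun_exp_neg_add_mul_I {z w : ℂ} {k : ℕ} {x : ℝ} (hz : ‖z‖ < 1) (hk : k ≠ 0)
    (hx : IsPrimitiveRoot (exp (-(x * I))) k) (hw : 0 < w.re) :
    logGenFun z (exp (-(w + x * I))) =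
      saddle k z ^ 2 / w + regLogGenFun z (exp (-(x * I))) w := by
  rw [neg_add_rev, exp_add, logGenFun_mul_exp_neg hz hk hx hw, saddle_sq, div_div]

theorem re_logGenFun_exp_neg_le {z w : ℂ} {k : ℕ} {x : ℝ} (hz : ‖z‖ < 1) (hk : k ≠ 0)
    (hx : IsPrimitiveRoot (exp (-(x * I))) k) (hw : 0 < w.re) :
    (logGenFun z (exp (-w))).re ≤
      fk k z ^ 2 / w.re + ‖regLogGenFun z (exp (-(x * I))) (w - x * I)‖ := by
  have hre : (w - x * I).re = w.re := by simp
  have hw' : 0 < (w - x * I).re := by rwa [hre]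
  have heq := logGenFun_exp_neg_add_mul_I hz hk hx hw'
  rw [sub_add_cancel] at heq
  rw [heq, add_re, ← saddle_re, ← hre]
  exact add_le_add (re_sq_div_le _ hw') (re_le_norm _)

theorem exp_neg_two_pi_mul_div_mul_I_pow {j : ℕ} (hj : j ≠ 0) (m : ℤ) :
    exp (-((2 * Real.pi * m / j : ℝ) * I)) ^ j = 1 := by
  rw [← exp_nat_mul, exp_eq_one_iff]
  refine ⟨-m, ?_⟩
  push_cast
  field_simp

theorem exists_re_logGenFun_le {z : ℂ} (hz : ‖z‖ < 1) {ε : ℝ} (hε : 0 < ε) :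
    ∃ C > 0, ∃ σ₀ > 0, ∀ w : ℂ, 0 < w.re → w.re < σ₀ →
      (logGenFun z (exp (-w))).re ≤ ε / w.re ∨ ∃ k ≠ 0, ∃ x : ℝ, |w.im - x| ≤ C * w.re ∧
        IsPrimitiveRoot (exp (-(x * I))) k ∧
          (logGenFun z (exp (-w))).re ≤ (fk k z ^ 2 + ε) / w.re := by
  obtain ⟨J, C, hC, hfar⟩ := exists_norm_logGenFun_le_of_forall_lt hz hε
  obtain ⟨K, hK⟩ := exists_norm_regLogGenFun_le hz J.factorial_ne_zero hC.le
  refine ⟨C, hC, ε / (|K| + 1), by positivity, fun w hw hwσ₀ ↦ ?_⟩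
  by_cases h : ∀ j ≠ 0, j < J → ∀ m : ℤ, C * w.re < |j * w.im - 2 * Real.pi * m|
  · exact .inl ((re_le_norm _).trans (hfar w hw h))
  push Not at h
  obtain ⟨j, hj₀, hjJ, m, hm⟩ := h
  have hj : (1 : ℝ) ≤ j := Nat.one_le_cast.2 (Nat.one_le_iff_ne_zero.2 hj₀)
  set x : ℝ := 2 * Real.pi * m / j with hx
  have hwx : |w.im - x| ≤ C * w.re := by
    have heq : w.im - x = (j * w.im - 2 * Real.pi * m) / j := by rw [hx]; field_simp
    rw [heq, abs_div, Nat.abs_cast]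
    exact (div_le_self (abs_nonneg _) hj).trans hm
  have hζj : exp (-(x * I)) ^ j = 1 := exp_neg_two_pi_mul_div_mul_I_pow hj₀ m
  have hprim := IsPrimitiveRoot.orderOf (exp (-(x * I)))
  have hk : orderOf (exp (-(x * I))) ≠ 0 :=
    (isOfFinOrder_iff_pow_eq_one.2 ⟨j, Nat.pos_of_ne_zero hj₀, hζj⟩).orderOf_pos.ne'
  refine .inr ⟨_, hk, x, hwx, hprim, (re_logGenFun_exp_neg_le hz hk hprim hw).trans ?_⟩
  have hreg : ‖regLogGenFun z (exp (-(x * I))) (w - x * I)‖ ≤ K := by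
    refine hK _ ?_ _ ⟨by simpa using hw.le, by simpa using hwx⟩
    exact orderOf_dvd_iff_pow_eq_one.1 ((orderOf_dvd_of_pow_eq_one hζj).trans
      (Nat.dvd_factorial (Nat.pos_of_ne_zero hj₀) hjJ.le))
  have hKε : K ≤ ε / w.re := by
    rw [lt_div_iff₀ (by positivity)] at hwσ₀
    rw [le_div_iff₀ hw]
    nlinarith [le_abs_self K]
  rw [add_div]
  gcongr
  exact hreg.trans hKε

theorem IsDominant.exists_re_logGenFun_le {k : ℕ} {z : ℂ} (h : IsDominant k z) (hz : ‖z‖ < 1) :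
    ∃ ε > 0, ∃ C > 0, ∃ σ₀ > 0, ∀ w : ℂ, 0 < w.re → w.re < σ₀ →
      (logGenFun z (exp (-w))).re ≤ (fk k z ^ 2 - ε) / w.re ∨
        ∃ x : ℝ, |w.im - x| ≤ C * w.re ∧ IsPrimitiveRoot (exp (-(x * I))) k := by
  obtain ⟨hpos, δ, hδ, hgap⟩ := h
  have hsq : 0 < fk k z ^ 2 := by positivity
  set ε := min (fk k z ^ 2) δ / 2 with hε_def
  have hε : 0 < ε := half_pos (lt_min hsq hδ)
  have hεfk : 2 * ε ≤ fk k z ^ 2 := by linarith [min_le_left (fk k z ^ 2) δ]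
  have hεδ : 2 * ε ≤ δ := by linarith [min_le_right (fk k z ^ 2) δ]
  obtain ⟨C, hC, σ₀, hσ₀, H⟩ := _root_.exists_re_logGenFun_le hz hε
  refine ⟨ε, hε, C, hC, σ₀, hσ₀, fun w hw hwσ₀ ↦ ?_⟩
  rcases H w hw hwσ₀ with hle | ⟨k', hk', x, hx, hprim, hle⟩
  · exact .inl (hle.trans (by gcongr; linarith))
  rcases eq_or_ne k' k with rfl | hne
  · exact .inr ⟨x, hx, hprim⟩
  · exact .inl (hle.trans (by gcongr; linarith [hgap k' hk' hne]))

/-! ### The saddle point -/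

/-- The integrand of Cauchy's formula for the coefficient of index `n = q ^ 4`, at the point
`u = exp (-w)` of the unit disc. -/
noncomputable def arcIntegrand (z : ℂ) (q : ℝ) (w : ℂ) : ℂ :=
  exp (logGenFun z (exp (-w)) + q ^ 4 * w)

/-- The vertical line through the saddle point `s / q ^ 2` of `s ^ 2 / w + q ^ 4 * w`, in the scale
`t` in which the peak of the integrand has constant width. -/
noncomputable def saddlePath (s : ℂ) (q t : ℝ) : ℂ :=
  ((q ^ 2)⁻¹ : ℝ) * (s + (t / q : ℝ) * I)

/-- The integrand `arcIntegrand` along `saddlePath`, divided by its exponentially large factor. -/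
noncomputable def saddleIntegrand (z ζ s : ℂ) (q t : ℝ) : ℂ :=
  exp (-(t ^ 2 / (s + (t / q : ℝ) * I)) + regLogGenFun z ζ (saddlePath s q t))

theorem continuous_arcIntegrand {z : ℂ} (hz : ‖z‖ < 1) (q : ℝ) {γ : ℝ → ℂ} (hγ : Continuous γ)
    (hpos : ∀ t, 0 < (γ t).re) : Continuous fun t ↦ arcIntegrand z q (γ t) := by
  have hlog : Continuous fun t ↦ logGenFun z (exp (-γ t)) := by
    refine continuous_iff_continuousAt.2 fun t ↦ ContinuousAt.comp' ?_ (by fun_prop)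
    refine continuousAt_logGenFun hz ?_
    rw [norm_exp, neg_re, Real.exp_lt_one_iff]
    exact neg_lt_zero.2 (hpos t)
  unfold arcIntegrand
  fun_prop

theorem continuous_saddlePath (s : ℂ) (q : ℝ) : Continuous (saddlePath s q) := by
  unfold saddlePath
  fun_prop

theorem saddlePath_eq (s : ℂ) {q : ℝ} (hq : q ≠ 0) (t : ℝ) :
    saddlePath s q t = (s.re / q ^ 2 : ℝ) + ((q ^ 3)⁻¹ * t + s.im / q ^ 2 : ℝ) * I := by
  have hq' : (q : ℂ) ≠ 0 := ofReal_ne_zero.2 hq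
  rw [saddlePath]
  nth_rw 1 [← re_add_im s]
  push_cast
  field_simp
  ring

theorem saddlePath_re_pos {s : ℂ} (hs : 0 < s.re) {q : ℝ} (hq : 0 < q) (t : ℝ) :
    0 < (saddlePath s q t).re := by
  rw [saddlePath, re_ofReal_mul]
  have hre : (s + (t / q : ℝ) * I).re = s.re := by simp
  rw [hre]
  positivity

theorem sq_div_saddlePath_add {s : ℂ} {q t : ℝ} (hq : q ≠ 0) (hs : s + (t / q : ℝ) * I ≠ 0) :
    s ^ 2 / saddlePath s q t + q ^ 4 * saddlePath s q t =
      2 * q ^ 2 * s - t ^ 2 / (s + (t / q : ℝ) * I) := by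
  have hq' : (q : ℂ) ≠ 0 := ofReal_ne_zero.2 hq
  rw [saddlePath, ofReal_inv, ofReal_pow]
  set r : ℂ := (t / q : ℝ) * I with hr
  have ht : (t : ℂ) ^ 2 = -(q ^ 2 * r ^ 2) := by
    rw [hr, mul_pow, I_sq]
    push_cast
    field_simp
  rw [ht]
  field_simp
  ring

theorem arcIntegrand_saddlePath {z : ℂ} (hz : ‖z‖ < 1) {k : ℕ} (hk : k ≠ 0) {α : ℝ}
    (hα : IsPrimitiveRoot (exp (-(α * I))) k) (hpos : 0 < fk k z) {q : ℝ} (hq : 0 < q) (t : ℝ) :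
    arcIntegrand z q (saddlePath (saddle k z) q t + α * I) =
      exp (2 * q ^ 2 * saddle k z + q ^ 4 * α * I) *
        saddleIntegrand z (exp (-(α * I))) (saddle k z) q t := by
  rw [← saddle_re] at hpos
  have hne : saddle k z + (t / q : ℝ) * I ≠ 0 := fun h ↦ hpos.ne' (by simpa using congrArg re h)
  rw [arcIntegrand, saddleIntegrand, ← exp_add,
    logGenFun_exp_neg_add_mul_I hz hk hα (saddlePath_re_pos hpos hq t)]
  congr 1
  linear_combination sq_div_saddlePath_add hq.ne' hne

theorem continuous_saddleIntegrand {z : ℂ} (hz : ‖z‖ < 1) {k : ℕ} (hk : k ≠ 0) {α : ℝ}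
    (hα : IsPrimitiveRoot (exp (-(α * I))) k) (hpos : 0 < fk k z) {q : ℝ} (hq : 0 < q) :
    Continuous (saddleIntegrand z (exp (-(α * I))) (saddle k z) q) := by
  have hcont := continuous_arcIntegrand hz q
    ((continuous_saddlePath (saddle k z) q).add_const (α * I))
    fun t ↦ by simpa using saddlePath_re_pos ((saddle_re k z).symm ▸ hpos) hq t
  simp only [arcIntegrand_saddlePath hz hk hα hpos hq] at hcont
  exact (Homeomorph.mulLeft₀ _ (exp_ne_zero _)).comp_continuous_iff.1 hcont

theorem add_mul_I_mem_sector {C q t : ℝ} {s : ℂ} (hs : 0 < s.re) (hq : 0 < q)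
    (ht : t ∈ Set.Ioc (q * (-(C * s.re) - s.im)) (q * (C * s.re - s.im))) :
    s + (t / q : ℝ) * I ∈ sector C := by
  have hlo : -(C * s.re) - s.im ≤ t / q := (le_div_iff₀' hq).2 ht.1.le
  have hhi : t / q ≤ C * s.re - s.im := (div_le_iff₀' hq).2 ht.2
  refine ⟨by simpa using hs.le, ?_⟩
  simpa using abs_le.2 ⟨by linarith, by linarith⟩

theorem saddlePath_mem_sector {C q t : ℝ} {s : ℂ} (h : s + (t / q : ℝ) * I ∈ sector C) :
    saddlePath s q t ∈ sector C :=
  ofReal_mul_mem_sector (by positivity) h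

theorem one_div_le_inv_re_of_mem_sector {C : ℝ} {w : ℂ} (hw : w ∈ sector C) (hpos : 0 < w.re) :
    1 / (w.re * (1 + C ^ 2)) ≤ w⁻¹.re := by
  have hnormSq : 0 < normSq w := normSq_pos.2 fun h ↦ hpos.ne' (by rw [h, zero_re])
  have him : w.im ^ 2 ≤ (C * w.re) ^ 2 := sq_le_sq.2 (hw.2.trans (le_abs_self _))
  rw [inv_re, div_le_div_iff₀ (by positivity) hnormSq, normSq_apply]
  linarith

theorem norm_saddleIntegrand_le {z ζ s : ℂ} {C q t K : ℝ} (hs : 0 < s.re)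
    (h : s + (t / q : ℝ) * I ∈ sector C) (hK : ‖regLogGenFun z ζ (saddlePath s q t)‖ ≤ K) :
    ‖saddleIntegrand z ζ s q t‖ ≤ Real.exp (-(1 / (s.re * (1 + C ^ 2))) * t ^ 2) * Real.exp K := by
  have hre : (s + (t / q : ℝ) * I).re = s.re := by simp
  have hinv := one_div_le_inv_re_of_mem_sector h (by rwa [hre])
  rw [saddleIntegrand, norm_exp, ← Real.exp_add, add_re, neg_re, div_eq_mul_inv, ← ofReal_pow,
    re_ofReal_mul]
  rw [hre] at hinv
  refine Real.exp_le_exp.2 (add_le_add ?_ ((re_le_norm _).trans hK))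
  nlinarith [sq_nonneg t]

theorem tendsto_add_mul_I (s : ℂ) (t : ℝ) :
    Tendsto (fun q : ℝ ↦ s + (t / q : ℝ) * I) atTop (𝓝 s) := by
  have h := ((continuous_ofReal.tendsto 0).comp
    (tendsto_const_nhds.div_atTop tendsto_id : Tendsto (fun q : ℝ ↦ t / q) _ _)).mul_const I
  simpa using h.const_add s

theorem tendsto_saddlePath (s : ℂ) (t : ℝ) :
    Tendsto (fun q : ℝ ↦ saddlePath s q t) atTop (𝓝 0) := by
  have h : Tendsto (fun q : ℝ ↦ (q ^ 2)⁻¹) atTop (𝓝 0) :=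
    tendsto_inv_atTop_zero.comp (tendsto_pow_atTop two_ne_zero)
  simpa [saddlePath] using ((continuous_ofReal.tendsto 0).comp h).mul (tendsto_add_mul_I s t)

theorem eventually_mem_Ioc_mul {a b : ℝ} (ha : a < 0) (hb : 0 < b) (t : ℝ) :
    ∀ᶠ q : ℝ in atTop, t ∈ Set.Ioc (q * a) (q * b) := by
  filter_upwards [(tendsto_id.atTop_mul_const_of_neg ha).eventually (eventually_lt_atBot t),
    (tendsto_id.atTop_mul_const hb).eventually (eventually_ge_atTop t)] with q hlo hhi
    using ⟨hlo, hhi⟩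

theorem tendsto_saddleIntegrand {z ζ s : ℂ} (hz : ‖z‖ < 1) {m : ℕ} (hm : m ≠ 0) (hζ : ζ ^ m = 1)
    {C : ℝ} (hs : 0 < s.re) (hC : |s.im| < C * s.re) (t : ℝ) :
    Tendsto (fun q ↦ saddleIntegrand z ζ s q t) atTop
      (𝓝 (exp (-(t ^ 2 / s) + regLogGenFun z ζ 0))) := by
  have hC₀ : 0 < C := pos_of_mul_pos_left ((abs_nonneg _).trans_lt hC) hs.le
  have hpath : Tendsto (fun q ↦ saddlePath s q t) atTop (𝓝[sector C] 0) := by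
    refine tendsto_nhdsWithin_iff.2 ⟨tendsto_saddlePath s t, ?_⟩
    obtain ⟨hlo, hhi⟩ := abs_lt.1 hC
    filter_upwards [eventually_gt_atTop 0,
      eventually_mem_Ioc_mul (a := -(C * s.re) - s.im) (b := C * s.re - s.im) (by linarith)
        (by linarith) t] with q hq ht
    exact saddlePath_mem_sector (add_mul_I_mem_sector hs hq ht)
  have hs₀ : s ≠ 0 := fun h ↦ hs.ne' (by rw [h, zero_re])
  exact ((tendsto_const_nhds.div (tendsto_add_mul_I s t) hs₀).neg.add
    ((continuousWithinAt_regLogGenFun_zero hz hm hζ hC₀.le).tendsto.comp hpath)).cexp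

theorem integral_exp_neg_sq_div {s : ℂ} (hs : 0 < s.re) :
    ∫ t : ℝ, exp (-(t ^ 2 / s)) = (Real.pi * s) ^ (1 / 2 : ℂ) := by
  have hs₀ : s ≠ 0 := fun h ↦ hs.ne' (by rw [h, zero_re])
  have hinv : 0 < s⁻¹.re := by
    rw [inv_re]
    exact div_pos hs (normSq_pos.2 hs₀)
  rw [← div_inv_eq_mul, ← integral_gaussian_complex hinv]
  congr 1 with t
  rw [div_eq_inv_mul, neg_mul]

/-- The limiting contribution, up to an exponential factor, of the arc around the primitive `k`-th
root of unity `ζ` to the integral of `arcIntegrand`. -/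
noncomputable def peak (k : ℕ) (z ζ : ℂ) : ℂ :=
  (Real.pi * saddle k z) ^ (1 / 2 : ℂ) * exp (regLogGenFun z ζ 0)

theorem peak_ne_zero {k : ℕ} {z : ℂ} (hpos : 0 < fk k z) (ζ : ℂ) : peak k z ζ ≠ 0 := by
  have hs : saddle k z ≠ 0 := fun h ↦ hpos.ne' (by rw [← saddle_re, h, zero_re])
  rw [peak]
  simp [cpow_eq_zero_iff, hs, Real.pi_ne_zero, exp_ne_zero]

theorem tendsto_integral_saddleIntegrand {z : ℂ} (hz : ‖z‖ < 1) {k : ℕ} (hk : k ≠ 0) {α C : ℝ}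
    (hα : IsPrimitiveRoot (exp (-(α * I))) k) (hpos : 0 < fk k z)
    (hC : |(saddle k z).im| < C * fk k z) :
    Tendsto (fun q : ℝ ↦ ∫ t in q * (-(C * fk k z) - (saddle k z).im)..
        q * (C * fk k z - (saddle k z).im), saddleIntegrand z (exp (-(α * I))) (saddle k z) q t)
      atTop (𝓝 (peak k z (exp (-(α * I))))) := by
  have hC₀ : 0 < C := pos_of_mul_pos_left ((abs_nonneg _).trans_lt hC) hpos.le
  obtain ⟨hlo, hhi⟩ := abs_lt.1 hC
  obtain ⟨K, hK⟩ := exists_norm_regLogGenFun_le hz hk hC₀.le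
  have hcont {q : ℝ} (hq : 0 < q) := continuous_saddleIntegrand hz hk hα hpos hq
  have hlim := tendsto_saddleIntegrand hz hk hα.pow_eq_one (saddle_re k z ▸ hpos)
    (saddle_re k z ▸ hC)
  have hint : peak k z (exp (-(α * I))) =
      ∫ t : ℝ, exp (-(t ^ 2 / saddle k z) + regLogGenFun z (exp (-(α * I))) 0) := by
    simp_rw [exp_add]
    rw [MeasureTheory.integral_mul_const, integral_exp_neg_sq_div (saddle_re k z ▸ hpos), peak]
  rw [← saddle_re] at *
  set s := saddle k z
  set T : ℝ → Set ℝ := fun q ↦ Set.Ioc (q * (-(C * s.re) - s.im)) (q * (C * s.re - s.im))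
  rw [hint]
  have hc : 0 < 1 / (s.re * (1 + C ^ 2)) := by positivity
  refine (MeasureTheory.tendsto_integral_filter_of_dominated_convergence
    (F := fun q ↦ (T q).indicator (saddleIntegrand z (exp (-(α * I))) s q))
    (fun t ↦ Real.exp (-(1 / (s.re * (1 + C ^ 2))) * t ^ 2) * Real.exp K) ?_ ?_
    ((integrable_exp_neg_mul_sq hc).mul_const _) (.of_forall fun t ↦ ?_)).congr' ?_
  · filter_upwards [eventually_gt_atTop 0] with q hq
    exact (hcont hq).aestronglyMeasurable.indicator measurableSet_Ioc
  · filter_upwards [eventually_gt_atTop 0] with q hq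
    refine .of_forall fun t ↦ ?_
    rw [norm_indicator_eq_indicator_norm]
    refine Set.indicator_apply_le' (fun ht ↦ ?_) fun _ ↦ by positivity
    have hsector := add_mul_I_mem_sector hpos hq ht
    exact norm_saddleIntegrand_le hpos hsector
      (hK _ hα.pow_eq_one _ (saddlePath_mem_sector hsector))
  · refine (hlim t).congr' ?_
    filter_upwards [eventually_mem_Ioc_mul (a := -(C * s.re) - s.im) (b := C * s.re - s.im)
      (by linarith) (by linarith) t] with q ht
    exact (Set.indicator_of_mem ht _).symm
  · filter_upwards [eventually_gt_atTop 0] with q hq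
    rw [intervalIntegral.integral_of_le (by gcongr; linarith),
      MeasureTheory.integral_indicator measurableSet_Ioc]

theorem norm_integral_arcIntegrand_eq {z : ℂ} (hz : ‖z‖ < 1) {k : ℕ} (hk : k ≠ 0) {α : ℝ}
    (hα : IsPrimitiveRoot (exp (-(α * I))) k) (hpos : 0 < fk k z) (C : ℝ) {q : ℝ} (hq : 0 < q) :
    q ^ 3 * Real.exp (-(2 * q ^ 2 * fk k z)) *
        ‖∫ y in α - C * (fk k z / q ^ 2)..α + C * (fk k z / q ^ 2),
          arcIntegrand z q ((fk k z / q ^ 2 : ℝ) + y * I)‖ =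
      ‖∫ t in q * (-(C * fk k z) - (saddle k z).im)..q * (C * fk k z - (saddle k z).im),
        saddleIntegrand z (exp (-(α * I))) (saddle k z) q t‖ := by
  have hsubst := intervalIntegral.smul_integral_comp_mul_add
    (a := q * (-(C * fk k z) - (saddle k z).im)) (b := q * (C * fk k z - (saddle k z).im))
    (fun y : ℝ ↦ arcIntegrand z q ((fk k z / q ^ 2 : ℝ) + y * I)) (q ^ 3)⁻¹
    (α + (saddle k z).im / q ^ 2)
  have hlo : (q ^ 3)⁻¹ * (q * (-(C * fk k z) - (saddle k z).im)) +
      (α + (saddle k z).im / q ^ 2) = α - C * (fk k z / q ^ 2) := by field_simp; ring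
  have hhi : (q ^ 3)⁻¹ * (q * (C * fk k z - (saddle k z).im)) +
      (α + (saddle k z).im / q ^ 2) = α + C * (fk k z / q ^ 2) := by field_simp; ring
  have hpath (t : ℝ) : (fk k z / q ^ 2 : ℝ) +
      ((q ^ 3)⁻¹ * t + (α + (saddle k z).im / q ^ 2) : ℝ) * I =
        saddlePath (saddle k z) q t + α * I := by
    rw [saddlePath_eq _ hq.ne', saddle_re]
    push_cast
    ring
  have hfactor : ‖exp (2 * q ^ 2 * saddle k z + q ^ 4 * α * I)‖ =
      Real.exp (2 * q ^ 2 * fk k z) := by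
    have hsplit : 2 * q ^ 2 * saddle k z + q ^ 4 * α * I =
        (2 * q ^ 2 : ℝ) * saddle k z + (q ^ 4 * α : ℝ) * I := by push_cast; ring
    rw [hsplit, exp_add, norm_mul, norm_exp_ofReal_mul_I, mul_one, norm_exp, re_ofReal_mul,
      saddle_re]
  rw [hlo, hhi] at hsubst
  simp only [hpath, arcIntegrand_saddlePath hz hk hα hpos hq] at hsubst
  rw [← hsubst, intervalIntegral.integral_const_mul, norm_smul, norm_mul, hfactor, Real.exp_neg,
    Real.norm_of_nonneg (by positivity)]
  field_simp

theorem norm_integral_sub_integral_le_of_norm_le {E : Type*} [NormedAddCommGroup E]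
    [NormedSpace ℝ E] {g : ℝ → E} (hg : Continuous g) {a b c d B : ℝ} (hac : a ≤ c) (hcd : c ≤ d)
    (hdb : d ≤ b) (hB : ∀ y ∈ Set.Icc a b, y ≤ c ∨ d ≤ y → ‖g y‖ ≤ B) :
    ‖(∫ y in a..b, g y) - ∫ y in c..d, g y‖ ≤ B * (b - a) := by
  have hB₀ : 0 ≤ B := (norm_nonneg _).trans
    (hB a (Set.left_mem_Icc.2 (hac.trans (hcd.trans hdb))) (.inl hac))
  have hint (x y : ℝ) : IntervalIntegrable g MeasureTheory.volume x y := hg.intervalIntegrable x y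
  have hsplit : (∫ y in a..b, g y) - ∫ y in c..d, g y = (∫ y in a..c, g y) + ∫ y in d..b, g y := by
    rw [← intervalIntegral.integral_add_adjacent_intervals (hint a c) (hint c b),
      ← intervalIntegral.integral_add_adjacent_intervals (hint c d) (hint d b)]
    abel
  have hleft : ‖∫ y in a..c, g y‖ ≤ B * |c - a| := by
    refine intervalIntegral.norm_integral_le_of_norm_le_const fun y hy ↦ ?_
    rw [Set.uIoc_of_le hac] at hy
    exact hB y ⟨hy.1.le, hy.2.trans (hcd.trans hdb)⟩ (.inl hy.2)
  have hright : ‖∫ y in d..b, g y‖ ≤ B * |b - d| := by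
    refine intervalIntegral.norm_integral_le_of_norm_le_const fun y hy ↦ ?_
    rw [Set.uIoc_of_le hdb] at hy
    exact hB y ⟨(hac.trans hcd).trans hy.1.le, hy.2⟩ (.inr hy.1.le)
  rw [abs_of_nonneg (sub_nonneg.2 hac)] at hleft
  rw [abs_of_nonneg (sub_nonneg.2 hdb)] at hright
  rw [hsplit]
  nlinarith [norm_add_le (∫ y in a..c, g y) (∫ y in d..b, g y)]

theorem tendsto_pow_mul_exp_neg_mul_sq (n : ℕ) {c : ℝ} (hc : 0 < c) :
    Tendsto (fun q : ℝ ↦ q ^ n * Real.exp (-c * q ^ 2)) atTop (𝓝 0) := by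
  have h := (rpow_mul_exp_neg_mul_sq_isLittleO_exp_neg hc n).trans_tendsto
    (Real.tendsto_exp_atBot.comp
      (tendsto_id.const_mul_atTop_of_neg (r := -(1 / 2)) (by norm_num)))
  simpa only [Real.rpow_natCast] using h

/-- `IsMajorAngle k lo hi α` says that `α` lies strictly between `lo` and `hi` and is the only angle
there for which `exp (-α * I)` is a primitive `k`-th root of unity. Uniqueness is required on a
slightly larger interval, since angles just outside the window also contribute inside it. -/
structure IsMajorAngle (k : ℕ) (lo hi α : ℝ) : Prop where
  lo_lt : lo < α
  lt_hi : α < hi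
  isPrimitiveRoot : IsPrimitiveRoot (exp (-(α * I))) k
  eq_of_isPrimitiveRoot : ∀ x ∈ Set.Ioo (lo - 1) (hi + 1),
    IsPrimitiveRoot (exp (-(x * I))) k → x = α

theorem tendsto_mul_div_sq (C a : ℝ) : Tendsto (fun q : ℝ ↦ C * (a / q ^ 2)) atTop (𝓝 0) := by
  simpa using (tendsto_const_nhds.div_atTop (tendsto_pow_atTop two_ne_zero)).const_mul C

theorem IsMajorAngle.exists_norm_arcIntegrand_le {k : ℕ} {lo hi α : ℝ}
    (hα : IsMajorAngle k lo hi α) {z : ℂ} (h : IsDominant k z) (hz : ‖z‖ < 1) :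
    ∃ c > 0, ∃ C > 0, ∀ᶠ q : ℝ in atTop, ∀ y ∈ Set.Icc lo hi, C * (fk k z / q ^ 2) < |y - α| →
      ‖arcIntegrand z q ((fk k z / q ^ 2 : ℝ) + y * I)‖ ≤
        Real.exp (2 * q ^ 2 * fk k z - c * q ^ 2) := by
  have hpos := h.1
  obtain ⟨ε, hε, C, hC, σ₀, hσ₀, hbound⟩ := h.exists_re_logGenFun_le hz
  refine ⟨ε / fk k z, by positivity, C, hC, ?_⟩
  filter_upwards [eventually_gt_atTop 0,
    (tendsto_mul_div_sq 1 (fk k z)).eventually (gt_mem_nhds hσ₀),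
    (tendsto_mul_div_sq C (fk k z)).eventually (gt_mem_nhds one_pos)] with q hq hqσ hqC y hy hyα
  rw [one_mul] at hqσ
  set σ := fk k z / q ^ 2 with hσ
  have hre : ((σ : ℂ) + y * I).re = σ := by simp
  have him : ((σ : ℂ) + y * I).im = y := by simp
  have hlog := hbound (σ + y * I) (by rw [hre]; positivity) (by rwa [hre])
  rw [hre, him] at hlog
  rcases hlog with hle | ⟨x, hx, hprim⟩
  · have hmul : ((q : ℂ) ^ 4 * (σ + y * I)).re = q ^ 4 * σ := by
      rw [← ofReal_pow, re_ofReal_mul, hre]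
    rw [arcIntegrand, norm_exp, Real.exp_le_exp, add_re, hmul]
    refine (add_le_add_left hle _).trans_eq ?_
    rw [hσ]
    field_simp
    ring
  · have hxy := abs_le.1 hx
    have hxα := hα.eq_of_isPrimitiveRoot x
      ⟨by linarith [hy.1, hxy.2], by linarith [hy.2, hxy.1]⟩ hprim
    exact absurd (hxα ▸ hx) hyα.not_ge

theorem IsMajorAngle.tendsto_norm_integral {k : ℕ} (hk : k ≠ 0) {lo hi α : ℝ}
    (hα : IsMajorAngle k lo hi α) {z : ℂ} (h : IsDominant k z) (hz : ‖z‖ < 1) :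
    Tendsto (fun q : ℝ ↦ q ^ 3 * Real.exp (-(2 * q ^ 2 * fk k z)) *
        ‖∫ y in lo..hi, arcIntegrand z q ((fk k z / q ^ 2 : ℝ) + y * I)‖)
      atTop (𝓝 ‖peak k z (exp (-(α * I)))‖) := by
  have hpos := h.1
  obtain ⟨c, hc, C₀, hC₀, hoff⟩ := hα.exists_norm_arcIntegrand_le h hz
  set C := C₀ + 1 + |(saddle k z).im| / fk k z with hC_def
  have hC : |(saddle k z).im| < C * fk k z := by
    rw [hC_def, add_mul, div_mul_cancel₀ _ hpos.ne']
    exact lt_add_of_pos_left _ (by positivity)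
  have hC₀C : C₀ < C := by
    have : 0 ≤ |(saddle k z).im| / fk k z := by positivity
    linarith
  have harc := (tendsto_integral_saddleIntegrand hz hk hα.isPrimitiveRoot hpos hC).norm
  have hsmall := tendsto_mul_div_sq C (fk k z)
  refine tendsto_of_tendsto_of_dist harc (squeeze_zero' (.of_forall fun _ ↦ dist_nonneg) ?_ <|
    by simpa using (tendsto_pow_mul_exp_neg_mul_sq 3 hc).mul_const (hi - lo))
  filter_upwards [eventually_gt_atTop 0, hoff,
    hsmall.eventually (gt_mem_nhds (sub_pos.2 hα.lo_lt)),
    hsmall.eventually (gt_mem_nhds (sub_pos.2 hα.lt_hi))] with q hq hoff hlo hhi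
  have hσ : 0 < fk k z / q ^ 2 := by positivity
  have hσC : C₀ * (fk k z / q ^ 2) < C * (fk k z / q ^ 2) := by gcongr
  have hcont := continuous_arcIntegrand hz q (γ := fun y : ℝ ↦ (fk k z / q ^ 2 : ℝ) + y * I)
    (by fun_prop) fun y ↦ by
      rwa [add_re, ofReal_re, re_ofReal_mul, I_re, mul_zero, add_zero]
  have hdiff := norm_integral_sub_integral_le_of_norm_le hcont (a := lo) (b := hi)
    (c := α - C * (fk k z / q ^ 2)) (d := α + C * (fk k z / q ^ 2))
    (B := Real.exp (2 * q ^ 2 * fk k z - c * q ^ 2)) (by linarith) (by nlinarith) (by linarith)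
    fun y hy hout ↦ hoff y hy <| hσC.trans_le <| le_abs.2 <|
      hout.symm.imp (fun _ ↦ by linarith) (fun _ ↦ by linarith)
  rw [← norm_integral_arcIntegrand_eq hz hk hα.isPrimitiveRoot hpos C hq, dist_comm, Real.dist_eq,
    ← mul_sub, abs_mul, abs_of_nonneg (by positivity)]
  calc _ ≤ q ^ 3 * Real.exp (-(2 * q ^ 2 * fk k z)) *
        (Real.exp (2 * q ^ 2 * fk k z - c * q ^ 2) * (hi - lo)) := by
        gcongr
        exact (abs_norm_sub_norm_le _ _).trans hdiff
    _ = q ^ 3 * Real.exp (-(c * q ^ 2)) * (hi - lo) := by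
        rw [mul_assoc, ← mul_assoc (Real.exp _), ← Real.exp_add, mul_assoc (q ^ 3)]
        ring_nf

/-! ### The major arcs for `k = 1, 2, 3` -/

theorem isPrimitiveRoot_exp_neg_mul_I_iff {k : ℕ} (hk : k ≠ 0) {x : ℝ} :
    IsPrimitiveRoot (exp (-(x * I))) k ↔ ∃ m : ℤ, IsCoprime m k ∧ x = 2 * Real.pi * m / k := by
  have hk' : (k : ℂ) ≠ 0 := Nat.cast_ne_zero.2 hk
  rw [exp_neg, IsPrimitiveRoot.inv_iff]
  constructor
  · rw [isPrimitiveRoot_iff _ _ hk]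
    rintro ⟨i, -, hi, hexp⟩
    obtain ⟨N, hN⟩ := exp_eq_exp_iff_exists_int.1 hexp.symm
    refine ⟨i + N * k, (Nat.isCoprime_iff_coprime.2 hi).add_mul_right_left N, ?_⟩
    refine ofReal_injective (mul_right_cancel₀ I_ne_zero (hN.trans ?_))
    push_cast
    field_simp
  · rintro ⟨m, hm, rfl⟩
    have harg : ((2 * Real.pi * m / k : ℝ) : ℂ) * I = 2 * Real.pi * I * (m / k) := by
      push_cast
      ring
    rw [harg]
    exact isPrimitiveRoot_exp_of_isCoprime m k hk hm

theorem isMajorAngle_of_eq_two_pi_mul_div {k : ℕ} (hk : k ≠ 0) {lo hi α : ℝ} {p m r : ℤ}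
    (hα : α = 2 * Real.pi * m / k) (hlo : lo < α) (hhi : α < hi)
    (hp : 2 * Real.pi * p / k ≤ lo - 1) (hr : hi + 1 ≤ 2 * Real.pi * r / k)
    (hm : IsCoprime m k) (huniq : ∀ i ∈ Set.Ioo p r, IsCoprime i k → i = m) :
    IsMajorAngle k lo hi α where
  lo_lt := hlo
  lt_hi := hhi
  isPrimitiveRoot := (isPrimitiveRoot_exp_neg_mul_I_iff hk).2 ⟨m, hm, hα⟩
  eq_of_isPrimitiveRoot x hx hprim := by
    obtain ⟨i, hi, rfl⟩ := (isPrimitiveRoot_exp_neg_mul_I_iff hk).1 hprim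
    have hlt {a b : ℤ} (h : 2 * Real.pi * a / k < 2 * Real.pi * b / k) : a < b := by
      rw [div_lt_div_iff_of_pos_right (by positivity),
        mul_lt_mul_iff_right₀ Real.two_pi_pos] at h
      exact_mod_cast h
    rw [huniq i ⟨hlt (hp.trans_lt hx.1), hlt (hx.2.trans_le hr)⟩ hi, hα]

theorem isMajorAngle_one : IsMajorAngle 1 (-Real.pi) Real.pi 0 := by
  have := Real.pi_gt_three
  refine isMajorAngle_of_eq_two_pi_mul_div one_ne_zero (p := -1) (m := 0) (r := 1)
    ?_ ?_ ?_ ?_ ?_ (by norm_num) ?_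
  any_goals push_cast; linarith
  rintro i ⟨hp, hr⟩ -
  lia

theorem isMajorAngle_two : IsMajorAngle 2 0 (2 * Real.pi) Real.pi := by
  have := Real.pi_gt_three
  refine isMajorAngle_of_eq_two_pi_mul_div two_ne_zero (p := -1) (m := 1) (r := 3)
    ?_ ?_ ?_ ?_ ?_ (by norm_num) ?_
  any_goals push_cast; linarith
  rintro i ⟨hp, hr⟩ hcop
  rw [Int.isCoprime_iff_gcd_eq_one] at hcop
  interval_cases i <;> simp_all

theorem isMajorAngle_three_left : IsMajorAngle 3 0 Real.pi (2 * Real.pi / 3) := by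
  have := Real.pi_gt_three
  refine isMajorAngle_of_eq_two_pi_mul_div three_ne_zero (p := -1) (m := 1) (r := 2)
    ?_ ?_ ?_ ?_ ?_ (by norm_num) ?_
  any_goals push_cast; linarith
  rintro i ⟨hp, hr⟩ hcop
  rw [Int.isCoprime_iff_gcd_eq_one] at hcop
  interval_cases i <;> simp_all

theorem isMajorAngle_three_right : IsMajorAngle 3 Real.pi (2 * Real.pi) (4 * Real.pi / 3) := by
  have := Real.pi_gt_three
  refine isMajorAngle_of_eq_two_pi_mul_div three_ne_zero (p := 1) (m := 2) (r := 4)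
    ?_ ?_ ?_ ?_ ?_ (by norm_num) ?_
  any_goals push_cast; linarith
  rintro i ⟨hp, hr⟩ hcop
  rw [Int.isCoprime_iff_gcd_eq_one] at hcop
  interval_cases i <;> simp_all

/-! ### The two peaks for `k = 3` -/

theorem regKernel_zero_of_ne_one {η : ℂ} (hη : η ≠ 1) : regKernel η 0 = η / (1 - η) := by
  rw [regKernel, if_neg hη, exp_zero]

theorem one_add_add_sq_eq_zero {ζ : ℂ} (hζ : IsPrimitiveRoot ζ 3) : 1 + ζ + ζ ^ 2 = 0 := by
  simpa [Finset.sum_range_succ] using hζ.geom_sum_eq_zero (by norm_num)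

theorem sq_eq_conj_of_isPrimitiveRoot_three {ζ : ℂ} (hζ : IsPrimitiveRoot ζ 3) :
    ζ ^ 2 = (starRingEnd ℂ) ζ := by
  rw [← inv_eq_conj (hζ.norm'_eq_one three_ne_zero)]
  exact eq_inv_of_mul_eq_one_left (by rw [← pow_succ, hζ.pow_eq_one])

theorem regKernel_zero_sub_regKernel_sq_zero {ζ : ℂ} (hζ : IsPrimitiveRoot ζ 3) :
    regKernel ζ 0 - regKernel (ζ ^ 2) 0 = (ζ - ζ ^ 2) / 3 := by
  have hζ₁ : ζ ≠ 1 := hζ.ne_one (by norm_num)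
  have hζ₂ : ζ ^ 2 ≠ 1 := hζ.pow_ne_one_of_pos_of_lt two_ne_zero (by norm_num)
  have hprod : (1 - ζ) * (1 - ζ ^ 2) = 3 := by
    linear_combination hζ.pow_eq_one - one_add_add_sq_eq_zero hζ
  rw [regKernel_zero_of_ne_one hζ₁, regKernel_zero_of_ne_one hζ₂,
    div_sub_div _ _ (sub_ne_zero.2 hζ₁.symm) (sub_ne_zero.2 hζ₂.symm), hprod]
  ring

theorem regKernel_pow_zero_sub_regKernel_sq_pow_zero {ζ : ℂ} (hζ : IsPrimitiveRoot ζ 3) (j : ℕ) :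
    regKernel (ζ ^ j) 0 - regKernel ((ζ ^ 2) ^ j) 0 = (ζ ^ j - (ζ ^ 2) ^ j) / 3 := by
  rw [← pow_mul, mul_comm, pow_mul]
  by_cases h : 3 ∣ j
  · simp [hζ.pow_eq_one_iff_dvd j |>.2 h]
  · exact regKernel_zero_sub_regKernel_sq_zero
      (hζ.pow_of_coprime j ((Nat.prime_three.coprime_iff_not_dvd.2 h).symm))

theorem regLogGenFun_zero_sub_regLogGenFun_sq_zero {z ζ : ℂ} (hz : ‖z‖ < 1)
    (hζ : IsPrimitiveRoot ζ 3) :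
    regLogGenFun z ζ 0 - regLogGenFun z (ζ ^ 2) 0 =
      (-log (1 - ζ * z) - -log (1 - ζ ^ 2 * z)) / 3 := by
  have hnorm : ‖ζ‖ = 1 := hζ.norm'_eq_one three_ne_zero
  have hsector : (0 : ℂ) ∈ sector 0 := by simp [sector]
  have hζ₂ : (ζ ^ 2) ^ 3 = 1 := by rw [← pow_mul, mul_comm, pow_mul, hζ.pow_eq_one, one_pow]
  have hreg := (hasSum_regLogGenFun hz three_ne_zero hζ.pow_eq_one le_rfl hsector).sub
    (hasSum_regLogGenFun hz three_ne_zero hζ₂ le_rfl hsector)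
  have hlog := ((hasSum_taylorSeries_neg_log (z := ζ * z) (by simpa [hnorm])).sub
    (hasSum_taylorSeries_neg_log (z := ζ ^ 2 * z) (by simpa [hnorm]))).div_const 3
  refine hreg.unique (hlog.congr_fun fun j ↦ ?_)
  rw [mul_zero, ← mul_sub, regKernel_pow_zero_sub_regKernel_sq_pow_zero hζ, mul_pow, mul_pow]
  ring

theorem im_mul_im_eq_zero_of_norm_one_sub_mul_eq {a z : ℂ}
    (h : ‖1 - a * z‖ = ‖1 - (starRingEnd ℂ) a * z‖) : a.im * z.im = 0 := by
  have hsq := congrArg (· ^ 2) h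
  simp only [norm_one_sub_sq, norm_mul, norm_conj, mul_re, conj_re, conj_im] at hsq
  linarith

theorem norm_peak_three_ne_norm_peak_three_sq {z ζ : ℂ} (hz : ‖z‖ < 1) (hpos : 0 < fk 3 z)
    (him : z.im ≠ 0) (hζ : IsPrimitiveRoot ζ 3) : ‖peak 3 z ζ‖ ≠ ‖peak 3 z (ζ ^ 2)‖ := by
  have hnorm : ‖ζ‖ = 1 := hζ.norm'_eq_one three_ne_zero
  intro h
  have hleft := left_ne_zero_of_mul (peak_ne_zero hpos ζ)
  rw [peak, peak, norm_mul, norm_mul, mul_right_inj' (norm_ne_zero_iff.2 hleft), norm_exp,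
    norm_exp, Real.exp_eq_exp] at h
  have hlog := congrArg re (regLogGenFun_zero_sub_regLogGenFun_sq_zero hz hζ)
  rw [sub_re, h, sub_self, div_ofNat_re, sub_re, neg_re, neg_re, log_re, log_re] at hlog
  have hone_sub {w : ℂ} (hw : ‖w‖ < 1) : 0 < ‖1 - w‖ :=
    norm_pos_iff.2 (one_sub_ne_zero_of_norm_lt_one hw)
  have heq : ‖1 - ζ * z‖ = ‖1 - ζ ^ 2 * z‖ :=
    Real.log_injOn_pos (hone_sub (by simpa [hnorm])) (hone_sub (by simpa [hnorm])) (by linarith)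
  have hconj := sq_eq_conj_of_isPrimitiveRoot_three hζ
  rw [hconj] at heq
  refine mul_ne_zero (fun hζ_im ↦ hζ.ne_one (by norm_num) ?_) him
    (im_mul_im_eq_zero_of_norm_one_sub_mul_eq heq)
  rw [conj_eq_iff_im.2 hζ_im, sq] at hconj
  exact mul_left_cancel₀ (hζ.ne_zero three_ne_zero) (by rw [hconj, mul_one])

/-! ### Subexponential growth of `F` -/

theorem tendsto_log_div_natCast_of_mul_mem_Icc {f g : ℕ → ℝ} {c D : ℝ} (hc : 0 < c)
    (hg : Tendsto (fun n ↦ Real.log (g n) / n) atTop (𝓝 0))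
    (h : ∀ᶠ n in atTop, g n * f n ∈ Set.Icc c D) :
    Tendsto (fun n ↦ Real.log (f n) / n) atTop (𝓝 0) := by
  have hprod : Tendsto (fun n ↦ Real.log (g n * f n) / n) atTop (𝓝 0) :=
    tendsto_bdd_div_atTop_nhds_zero (b := Real.log c) (B := Real.log D)
      (h.mono fun n hn ↦ Real.log_le_log hc hn.1)
      (h.mono fun n hn ↦ Real.log_le_log (hc.trans_le hn.1) hn.2) tendsto_natCast_atTop_atTop
  have hdiff := hprod.sub hg
  rw [sub_zero] at hdiff
  refine hdiff.congr' (h.mono fun n hn ↦ ?_)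
  have hne : g n * f n ≠ 0 := (hc.trans_le hn.1).ne'
  rw [Real.log_mul (left_ne_zero_of_mul hne) (right_ne_zero_of_mul hne)]
  ring

theorem tendsto_log_pow_mul_exp_sqrt_sqrt_div (m : ℕ) (a : ℝ) :
    Tendsto (fun n : ℕ ↦ Real.log (√√(n : ℝ) ^ m * Real.exp (-(2 * √√(n : ℝ) ^ 2 * a))) / n)
      atTop (𝓝 0) := by
  have hlog : Tendsto (fun n : ℕ ↦ Real.log n / n) atTop (𝓝 0) :=
    Real.isLittleO_log_id_atTop.tendsto_div_nhds_zero.comp tendsto_natCast_atTop_atTop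
  have hsqrt : Tendsto (fun n : ℕ ↦ (√(n : ℝ))⁻¹) atTop (𝓝 0) :=
    (Real.tendsto_sqrt_atTop.comp tendsto_natCast_atTop_atTop).inv_tendsto_atTop
  have hsum := (hlog.const_mul (m / 4 : ℝ)).sub (hsqrt.const_mul (2 * a))
  rw [mul_zero, mul_zero, sub_zero] at hsum
  refine hsum.congr' ?_
  filter_upwards [eventually_gt_atTop 0] with n hn
  have hn₀ : (0 : ℝ) < n := Nat.cast_pos.2 hn
  rw [Real.log_mul (by positivity) (Real.exp_ne_zero _), Real.log_pow, Real.log_exp,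
    Real.log_sqrt (Real.sqrt_nonneg _), Real.log_sqrt hn₀.le, Real.sq_sqrt (Real.sqrt_nonneg _),
    ← Real.sqrt_div_self]
  ring

theorem integral_arcIntegrand {z : ℂ} (hz : ‖z‖ < 1) {n : ℕ} (hn : n ≠ 0) {q : ℝ}
    (hnq : q ^ 4 = n) {σ : ℝ} (hσ : 0 < σ) (b : ℝ) :
    ∫ y in b..b + 2 * Real.pi, arcIntegrand z q (σ + y * I) = 2 * Real.pi * F n z := by
  have hnq' : (q : ℂ) ^ 4 = n := mod_cast congrArg ((↑) : ℝ → ℂ) hnq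
  simp only [arcIntegrand, exp_add, hnq', integral_exp_logGenFun hz hn hσ]

theorem tendsto_log_norm_F_div_of_eventually_mem_Icc {z : ℂ} (hz : ‖z‖ < 1) {a : ℝ} (ha : 0 < a)
    (b : ℝ) {c D : ℝ} (hc : 0 < c)
    (h : ∀ᶠ q : ℝ in atTop, q ^ 3 * Real.exp (-(2 * q ^ 2 * a)) *
      ‖∫ y in b..b + 2 * Real.pi, arcIntegrand z q ((a / q ^ 2 : ℝ) + y * I)‖ ∈ Set.Icc c D) :
    Tendsto (fun n : ℕ ↦ Real.log ‖F n z‖ / n) atTop (𝓝 0) := by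
  have hq : Tendsto (fun n : ℕ ↦ √√(n : ℝ)) atTop atTop :=
    Real.tendsto_sqrt_atTop.comp (Real.tendsto_sqrt_atTop.comp tendsto_natCast_atTop_atTop)
  refine tendsto_log_div_natCast_of_mul_mem_Icc (D := D / (2 * Real.pi))
    (div_pos hc Real.two_pi_pos) (tendsto_log_pow_mul_exp_sqrt_sqrt_div 3 a) ?_
  filter_upwards [hq.eventually h, hq.eventually_gt_atTop 0, eventually_ne_atTop 0]
    with n hmem hpos hn
  have hnq : √√(n : ℝ) ^ 4 = n := by
    rw [pow_mul _ 2 2, Real.sq_sqrt (Real.sqrt_nonneg _), Real.sq_sqrt n.cast_nonneg]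
  have hnorm : ‖2 * Real.pi * F n z‖ = ‖F n z‖ * (2 * Real.pi) := by
    rw [norm_mul, mul_comm, ← ofReal_ofNat, ← ofReal_mul, norm_real,
      Real.norm_of_nonneg Real.two_pi_pos.le]
  rw [integral_arcIntegrand hz hn hnq (by positivity), hnorm, ← mul_assoc] at hmem
  exact ⟨(div_le_iff₀ Real.two_pi_pos).2 hmem.1, (le_div_iff₀ Real.two_pi_pos).2 hmem.2⟩

theorem IsDominant.tendsto_log_norm_F_div {k : ℕ} (hk : k ≠ 0) {z : ℂ} (h : IsDominant k z)
    (hz : ‖z‖ < 1) {lo hi α : ℝ} (hα : IsMajorAngle k lo hi α) (hhi : hi = lo + 2 * Real.pi) :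
    Tendsto (fun n : ℕ ↦ Real.log ‖F n z‖ / n) atTop (𝓝 0) := by
  subst hhi
  have hpeak := norm_pos_iff.2 (peak_ne_zero h.1 (exp (-(α * I))))
  exact tendsto_log_norm_F_div_of_eventually_mem_Icc hz h.1 lo (half_pos hpeak)
    (D := ‖peak k z (exp (-(α * I)))‖ + 1)
    ((hα.tendsto_norm_integral hk h hz).eventually
      (Icc_mem_nhds (half_lt_self hpeak) (lt_add_one _)))

theorem IsDominant.tendsto_log_norm_F_div_of_two_arcs {k : ℕ} (hk : k ≠ 0) {z : ℂ}
    (h : IsDominant k z) (hz : ‖z‖ < 1) {lo mid hi α₁ α₂ : ℝ}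
    (hα₁ : IsMajorAngle k lo mid α₁) (hα₂ : IsMajorAngle k mid hi α₂) (hhi : hi = lo + 2 * Real.pi)
    (hne : ‖peak k z (exp (-(α₁ * I)))‖ ≠ ‖peak k z (exp (-(α₂ * I)))‖) :
    Tendsto (fun n : ℕ ↦ Real.log ‖F n z‖ / n) atTop (𝓝 0) := by
  subst hhi
  have hgap := abs_pos.2 (sub_ne_zero.2 hne)
  have hlim₁ := hα₁.tendsto_norm_integral hk h hz
  have hlim₂ := hα₂.tendsto_norm_integral hk h hz
  refine tendsto_log_norm_F_div_of_eventually_mem_Icc hz h.1 lo (half_pos hgap)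
    (D := ‖peak k z (exp (-(α₁ * I)))‖ + ‖peak k z (exp (-(α₂ * I)))‖ + 1) ?_
  filter_upwards [(hlim₁.sub hlim₂).abs.eventually_const_le (half_lt_self hgap),
    (hlim₁.add hlim₂).eventually_le_const (lt_add_one _), eventually_gt_atTop 0] with q hlo hhi hq
  have hpos : 0 < fk k z / q ^ 2 := div_pos h.1 (by positivity)
  have hcont : Continuous fun y : ℝ ↦ arcIntegrand z q ((fk k z / q ^ 2 : ℝ) + y * I) :=
    continuous_arcIntegrand hz q (by fun_prop) fun y ↦ by
      rwa [add_re, ofReal_re, re_ofReal_mul, I_re, mul_zero, add_zero]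
  have hw : 0 ≤ q ^ 3 * Real.exp (-(2 * q ^ 2 * fk k z)) := by positivity
  rw [← mul_sub, abs_mul, abs_of_nonneg hw] at hlo
  rw [← mul_add] at hhi
  rw [← intervalIntegral.integral_add_adjacent_intervals (hcont.intervalIntegrable lo mid)
    (hcont.intervalIntegrable mid _)]
  have hsub {u v : ℂ} : |‖u‖ - ‖v‖| ≤ ‖u + v‖ := by simpa using abs_norm_sub_norm_le u (-v)
  exact ⟨hlo.trans (mul_le_mul_of_nonneg_left hsub hw),
    (mul_le_mul_of_nonneg_left (norm_add_le _ _) hw).trans hhi⟩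

theorem IsDominant.norm_peak_three_ne {z : ℂ} (h : IsDominant 3 z) (hz : ‖z‖ < 1) :
    ‖peak 3 z (exp (-((2 * Real.pi / 3 : ℝ) * I)))‖ ≠
      ‖peak 3 z (exp (-((4 * Real.pi / 3 : ℝ) * I)))‖ := by
  have hsq : exp (-((4 * Real.pi / 3 : ℝ) * I)) = exp (-((2 * Real.pi / 3 : ℝ) * I)) ^ 2 := by
    rw [← exp_nat_mul]
    push_cast
    ring_nf
  rw [hsq]
  exact norm_peak_three_ne_norm_peak_three_sq hz h.1 (h.im_ne_zero hz.le)
    isMajorAngle_three_left.isPrimitiveRoot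

/-- Inside the unit disk, away from `0` and in the interior of one of the regions,
`(1/n)·ln|Fₙ(z)| → 0`. -/
theorem log_abs_partition_poly_inside (z : ℂ) (hz0 : 0 < ‖z‖) (hz1 : ‖z‖ < 1)
    (hz : z ∈ interior R1 ∨ z ∈ interior R2 ∨ z ∈ interior R3) :
    Tendsto (fun n : ℕ => Real.log ‖F n z‖ / n) atTop (nhds 0) := by
  rcases exists_isDominant (norm_pos_iff.1 hz0) hz1 hz with h | h | h
  · exact h.tendsto_log_norm_F_div one_ne_zero hz1 isMajorAngle_one (by ring)
  · exact h.tendsto_log_norm_F_div two_ne_zero hz1 isMajorAngle_two (zero_add _).symm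
  · exact h.tendsto_log_norm_F_div_of_two_arcs three_ne_zero hz1 isMajorAngle_three_left
      isMajorAngle_three_right (zero_add _).symm (h.norm_peak_three_ne hz1)
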